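/- arXiv:1509.04970 — 3 statements merged into one kernel-verified Lean document; each statement's English description precedes it below -/
import Mathlib

section
/- Let G ⊆ M_n(ℂ) be an irreducible group of matrices. The commutator subgroup [G,G] consists of involutions (matrices J with J² = I) if and only if, up to simultaneous similarity, G is contained in ℂ^×·H, where H is a signed permutation group with commutative pattern and ℂ^×·H denotes the set of all nonzero complex scalar multiples of members of H. -/
open Matrix BigOperators
open scoped Classical

noncomputable section

abbrev Mat (n : ℕ) := Matrix (Fin n) (Fin n) ℂ

/-- A set of matrices is irreducible if the only invariant subspaces are `⊥` and `⊤`. -/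
def IrreducibleSet {n : ℕ} (S : Set (Mat n)) : Prop :=
  ∀ W : Submodule ℂ (Fin n → ℂ),
    (∀ A ∈ S, ∀ v ∈ W, A.mulVec v ∈ W) → W = ⊥ ∨ W = ⊤

/-- All complex eigenvalues are real. -/
def RealSpectrum {n : ℕ} (M : Mat n) : Prop :=
  ∀ z ∈ spectrum ℂ M, z.im = 0

/-- A set of matrices forming a group of invertible matrices under multiplication. -/
def IsMatGroup {n : ℕ} (G : Set (Mat n)) : Prop :=
  (1 : Mat n) ∈ G ∧ (∀ A ∈ G, ∀ B ∈ G, A * B ∈ G) ∧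
    ∀ A ∈ G, IsUnit A ∧ A⁻¹ ∈ G

/-- Monomial matrix: exactly one nonzero entry in each row and each column. -/
def IsMonomialMat {n : ℕ} (M : Mat n) : Prop :=
  (∀ i, ∃! j, M i j ≠ 0) ∧ ∀ j, ∃! i, M i j ≠ 0

/-- Pattern of a matrix: nonzero entries replaced by 1. -/
def patMat {n : ℕ} (M : Mat n) : Mat n :=
  Matrix.of fun i j => if M i j = 0 then 0 else 1

/-- Signed permutation matrix. -/
def IsSignedPermMat {n : ℕ} (M : Mat n) : Prop :=
  IsMonomialMat M ∧ ∀ i j, M i j = 0 ∨ M i j = 1 ∨ M i j = -1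

/-- Permutation matrix associated to `σ` (sending `e j` to `e (σ j)`). -/
def permMat {n : ℕ} (σ : Equiv.Perm (Fin n)) : Mat n :=
  Matrix.of fun i j => if i = σ j then 1 else 0

def IsPermMat {n : ℕ} (M : Mat n) : Prop := ∃ σ : Equiv.Perm (Fin n), M = permMat σ

/-- The cyclic permutation matrix `C_n`, sending `e i` to `e (i+1 mod n)`. -/
def cycMat (n : ℕ) : Mat n :=
  Matrix.of fun i j => if (i : ℕ) = ((j : ℕ) + 1) % n then 1 else 0

/-- The cyclic group `𝒞_n` generated by `C_n`. -/
def cycSet (n : ℕ) : Set (Mat n) := {M | ∃ k : ℕ, M = cycMat n ^ k}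

/-- Signed diagonal matrix: member of `D_n(±1)`. -/
def IsSignedDiag {n : ℕ} (M : Mat n) : Prop :=
  ∃ d : Fin n → ℂ, (∀ i, d i = 1 ∨ d i = -1) ∧ M = Matrix.diagonal d

/-- `avg_G(D) = D · D^G · … · D^(G^(m-1))` where `m = orderOf G` and `D^G = G⁻¹ D G`. -/
def avgMat {n : ℕ} (G D : Mat n) : Mat n :=
  ((List.range (orderOf G)).map fun k => (G ^ k)⁻¹ * D * G ^ k).prod

/-- `J_K = {J ∈ D_n(±1) : avg_G(J) = det(J)·I for all G ∈ K \ {I}}`. -/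
def Jset {n : ℕ} (K : Set (Mat n)) : Set (Mat n) :=
  {J | IsSignedDiag J ∧ ∀ G ∈ K, G ≠ 1 → avgMat G J = J.det • (1 : Mat n)}

/-- `J_K^+ = {J ∈ J_K : det J = 1}`. -/
def JsetPlus {n : ℕ} (K : Set (Mat n)) : Set (Mat n) :=
  {J | J ∈ Jset K ∧ J.det = 1}

/-- Realizable: simultaneously similar to a set of real-entried matrices. -/
def Realizable {n : ℕ} (S : Set (Mat n)) : Prop :=
  ∃ T : Mat n, IsUnit T ∧ ∀ A ∈ S, ∀ i j, ((T⁻¹ * A * T) i j).im = 0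

/-- Indecomposable: no common invariant standard subspace except `0` and `ℂ^n`. -/
def IndecomposableSet {n : ℕ} (S : Set (Mat n)) : Prop :=
  ∀ I : Set (Fin n),
    (∀ A ∈ S, ∀ j ∈ I, ∀ i, A i j ≠ 0 → i ∈ I) → I = ∅ ∨ I = Set.univ

/-- Kronecker product, identified with a matrix over `Fin (m*n)` canonically
(first factor's index is the block index). -/
def kron {m n : ℕ} (A : Mat m) (B : Mat n) : Mat (m * n) :=
  Matrix.reindex finProdFinEquiv finProdFinEquiv (Matrix.kroneckerMap (· * ·) A B)

end

/-- generalized permutation matrix -/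
noncomputable def spMat {n : ℕ} (σ : Equiv.Perm (Fin n)) (s : Fin n → ℂ) : Mat n :=
  Matrix.of fun i j => if i = σ j then s j else 0

lemma spMat_mul {n : ℕ} (σ τ : Equiv.Perm (Fin n)) (s t : Fin n → ℂ) :
    spMat σ s * spMat τ t = spMat (σ * τ) (fun j => s (τ j) * t j) := by
  ext i j
  simp only [spMat, Matrix.mul_apply, Matrix.of_apply]
  rw [Finset.sum_eq_single (τ j)]
  · by_cases h : i = σ (τ j) <;> simp [h]
  · intro b _ hb; simp [hb]
  · simp

lemma diag_mul_spMat {n : ℕ} (σ : Equiv.Perm (Fin n)) (d s : Fin n → ℂ) :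
    Matrix.diagonal d * spMat σ s = spMat σ (fun j => d (σ j) * s j) := by
  ext i j
  simp only [spMat, Matrix.diagonal_mul, Matrix.of_apply]
  split_ifs with h <;> simp [h]

lemma patMat_spMat {n : ℕ} (σ : Equiv.Perm (Fin n)) (s : Fin n → ℂ) (hs : ∀ j, s j ≠ 0) :
    patMat (spMat σ s) = spMat σ 1 := by
  ext i j
  simp only [patMat, spMat, Matrix.of_apply]
  split_ifs <;> simp_all

lemma spMat_inj {n : ℕ} (σ τ : Equiv.Perm (Fin n)) (h : spMat σ 1 = spMat τ 1) : σ = τ := by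
  ext j
  have := congrFun (congrFun h (σ j)) j
  simp only [spMat, Matrix.of_apply] at this
  by_contra hne
  simp_all [Fin.ext_iff]

lemma pm_ne {z : ℂ} (h : z = 1 ∨ z = -1) : z ≠ 0 := by
  rcases h with rfl | rfl <;> simp

lemma pm_mul {z w : ℂ} (h : z = 1 ∨ z = -1) (h' : w = 1 ∨ w = -1) : z * w = 1 ∨ z * w = -1 := by
  rcases h with rfl | rfl <;> rcases h' with rfl | rfl <;> simp

lemma pm_sq {z : ℂ} (h : z = 1 ∨ z = -1) : z * z = 1 := by
  rcases h with rfl | rfl <;> simp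

lemma isSigned_spMat {n : ℕ} (σ : Equiv.Perm (Fin n)) (s : Fin n → ℂ)
    (hs : ∀ j, s j = 1 ∨ s j = -1) : IsSignedPermMat (spMat σ s) := by
  refine ⟨⟨fun i => ⟨σ.symm i, ?_, ?_⟩, fun j => ⟨σ j, ?_, ?_⟩⟩, fun i j => ?_⟩
  · simpa [spMat] using pm_ne (hs _)
  · intro j hj
    simp only [spMat, Matrix.of_apply] at hj
    by_cases h : i = σ j
    · simp [h]
    · simp [h] at hj
  · simpa [spMat] using pm_ne (hs _)
  · intro i hi
    simp only [spMat, Matrix.of_apply] at hi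
    by_contra h
    simp [h] at hi
  · simp only [spMat, Matrix.of_apply]
    split_ifs
    · exact Or.inr (hs j)
    · exact Or.inl rfl

lemma exists_spMat {n : ℕ} (M : Mat n) (h : IsSignedPermMat M) :
    ∃ (σ : Equiv.Perm (Fin n)) (s : Fin n → ℂ), (∀ j, s j = 1 ∨ s j = -1) ∧ M = spMat σ s := by
  obtain ⟨⟨hr, hc⟩, hv⟩ := h
  choose f hf hfu using hc
  have hinj : Function.Injective f := by
    intro a b hab
    obtain ⟨j, hj, hju⟩ := hr (f a)
    rw [hju a (hf a), hju b (by rw [hab]; exact hf b)]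
  refine ⟨Equiv.ofBijective f (Finite.injective_iff_bijective.mp hinj), fun j => M (f j) j,
    fun j => (hv (f j) j).resolve_left (hf j), ?_⟩
  ext i j
  simp only [spMat, Matrix.of_apply, Equiv.ofBijective_apply]
  split_ifs with h
  · rw [h]
  · by_contra h0
    exact h (hfu j i h0)

lemma comm_signed {n : ℕ} (M N : Mat n) (hM : IsSignedPermMat M) (hN : IsSignedPermMat N)
    (hp : patMat M * patMat N = patMat N * patMat M) :
    ∃ d : Fin n → ℂ, (∀ i, d i = 1 ∨ d i = -1) ∧ M * N = Matrix.diagonal d * (N * M) := by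
  obtain ⟨σ, s, hs, rfl⟩ := exists_spMat M hM
  obtain ⟨τ, t, ht, rfl⟩ := exists_spMat N hN
  rw [patMat_spMat _ _ fun j => pm_ne (hs j), patMat_spMat _ _ fun j => pm_ne (ht j), spMat_mul,
    spMat_mul] at hp
  have hc : σ * τ = τ * σ := by
    apply spMat_inj
    convert hp using 2 <;> ext <;> simp
  refine ⟨fun i => s (τ ((σ * τ).symm i)) * t ((σ * τ).symm i) *
      (t (σ ((σ * τ).symm i)) * s ((σ * τ).symm i)), fun i =>
      pm_mul (pm_mul (hs _) (ht _)) (pm_mul (ht _) (hs _)), ?_⟩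
  rw [spMat_mul, spMat_mul, diag_mul_spMat, ← hc]
  congr 1
  ext j
  rw [Equiv.symm_apply_apply]
  linear_combination (-s (τ j) * t j) * pm_sq (pm_mul (ht (σ j)) (hs j))

open scoped commutatorElement in
lemma easy_dir {n : ℕ} (G : Subgroup (Mat n)ˣ)
    (T : Mat n) (H : Set (Mat n)) (hT : IsUnit T)
    (hs : ∀ M ∈ H, IsSignedPermMat M)
    (hp : ∀ A ∈ H, ∀ B ∈ H, patMat A * patMat B = patMat B * patMat A)
    (hG : ∀ A ∈ G, ∃ c : ℂ, c ≠ 0 ∧ ∃ M ∈ H, T⁻¹ * (A : Mat n) * T = c • M) :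
    ∀ A ∈ ⁅G, G⁆, (A : Mat n) ^ 2 = 1 := by
  have hT' : T⁻¹ * T = 1 := Matrix.nonsing_inv_mul T ((Matrix.isUnit_iff_isUnit_det T).mp hT)
  have hT'' : T * T⁻¹ = 1 := Matrix.mul_nonsing_inv T ((Matrix.isUnit_iff_isUnit_det T).mp hT)
  have hdd : ∀ d d' : Fin n → ℂ, T * diagonal d * T⁻¹ * (T * diagonal d' * T⁻¹) =
      T * diagonal (fun i => d i * d' i) * T⁻¹ := by
    intro d d'
    rw [← Matrix.diagonal_mul_diagonal]
    calc _ = T * diagonal d * (T⁻¹ * T) * diagonal d' * T⁻¹ := by simp only [mul_assoc]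
      _ = _ := by rw [hT']; simp only [mul_assoc, mul_one]
  have hsq : ∀ d : Fin n → ℂ, (∀ i, d i = 1 ∨ d i = -1) →
      T * diagonal d * T⁻¹ * (T * diagonal d * T⁻¹) = 1 := by
    intro d hd
    rw [hdd, show (fun i => d i * d i) = fun _ => 1 from funext fun i => pm_sq (hd i)]
    simp [hT'']
  let K : Subgroup (Mat n)ˣ :=
    { carrier := {X | ∃ d : Fin n → ℂ, (∀ i, d i = 1 ∨ d i = -1) ∧
        (X : Mat n) = T * diagonal d * T⁻¹}
      one_mem' := ⟨fun _ => 1, fun _ => Or.inl rfl, by simp [hT'']⟩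
      mul_mem' := by
        rintro a b ⟨d, hd, ha⟩ ⟨d', hd', hb⟩
        exact ⟨fun i => d i * d' i, fun i => pm_mul (hd i) (hd' i), by
          rw [Units.val_mul, ha, hb, hdd]⟩
      inv_mem' := by
        rintro a ⟨d, hd, ha⟩
        refine ⟨d, hd, ?_⟩
        rw [← ha]
        have h1 : a * a = 1 := Units.ext (by rw [Units.val_mul, ha, hsq d hd]; rfl)
        rw [inv_eq_of_mul_eq_one_left h1] }
  have hle : ⁅G, G⁆ ≤ K := by
    rw [Subgroup.commutator_le]
    intro A hA B hB
    obtain ⟨c, hc, M, hM, hAM⟩ := hG A hA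
    obtain ⟨e, he, N, hN, hBN⟩ := hG B hB
    obtain ⟨d, hd, hMN⟩ := comm_signed M N (hs M hM) (hs N hN) (hp M hM N hN)
    refine ⟨d, hd, ?_⟩
    have key : ∀ X Y : Mat n, X * Y = T * ((T⁻¹ * X * T) * (T⁻¹ * Y * T)) * T⁻¹ := by
      intro X Y
      calc X * Y = (T * T⁻¹) * X * (T * T⁻¹) * Y * (T * T⁻¹) := by rw [hT'']; simp
        _ = _ := by simp only [mul_assoc]
    have hAB : (A : Mat n) * B = T * diagonal d * T⁻¹ * (B * A) := by
      rw [key A B, key B A, hAM, hBN]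
      simp only [smul_mul_smul_comm, hMN]
      calc _ = T * diagonal d * ((c * e) • (N * M)) * T⁻¹ := by
            simp only [mul_assoc, Matrix.mul_smul, Matrix.smul_mul]
        _ = T * diagonal d * (T⁻¹ * T) * ((c * e) • (N * M)) * T⁻¹ := by rw [hT', mul_one]
        _ = _ := by simp only [mul_assoc, mul_comm c e]
    have : ((⁅A, B⁆ : (Mat n)ˣ) : Mat n) = A * B * (↑(B * A)⁻¹ : Mat n) := by
      rw [commutatorElement_def, _root_.mul_inv_rev, ← Units.val_mul, ← Units.val_mul, mul_assoc (A * B)]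
    rw [this, hAB, mul_assoc, ← Units.val_mul, Units.mul_inv, mul_one]
  intro A hA
  obtain ⟨d, hd, hA'⟩ := hle hA
  rw [pow_two, hA', hsq d hd]

lemma exists_common_eigenvector {V : Type*} [AddCommGroup V] [Module ℂ V] [FiniteDimensional ℂ V]
    [Nontrivial V] (S : Set (Module.End ℂ V)) (hS : ∀ f ∈ S, ∀ g ∈ S, f * g = g * f) :
    ∃ v : V, v ≠ 0 ∧ ∀ f ∈ S, ∃ c : ℂ, f v = c • v := by
  obtain ⟨W, ⟨hW0, hWi⟩, hmin⟩ := (wellFounded_lt (α := Submodule ℂ V)).has_min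
    {W | W ≠ ⊥ ∧ ∀ f ∈ S, ∀ v ∈ W, f v ∈ W} ⟨⊤, top_ne_bot, fun _ _ _ _ => trivial⟩
  obtain ⟨v, hv, hv0⟩ := W.ne_bot_iff.mp hW0
  refine ⟨v, hv0, fun f hf => ?_⟩
  have : Nontrivial W := (Submodule.nontrivial_iff_ne_bot).mpr hW0
  obtain ⟨c, hc⟩ := Module.End.exists_eigenvalue (f.restrict (hWi f hf))
  obtain ⟨w, hw⟩ := hc.exists_hasEigenvector
  have hw1 : f w = c • (w : V) := by
    have := hw.apply_eq_smul
    simpa using congrArg Subtype.val this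
  have hw0 : (w : V) ≠ 0 := by
    simpa using hw.2
  refine ⟨c, ?_⟩
  have hmem : W ⊓ Module.End.eigenspace f c ∈
      {W : Submodule ℂ V | W ≠ ⊥ ∧ ∀ f ∈ S, ∀ v ∈ W, f v ∈ W} := by
    refine ⟨?_, ?_⟩
    · intro h
      apply hw0
      have : (w : V) ∈ W ⊓ Module.End.eigenspace f c :=
        ⟨w.2, Module.End.mem_eigenspace_iff.mpr hw1⟩
      rw [h] at this
      simpa using this
    · rintro g hg u ⟨hu, hu'⟩
      refine ⟨hWi g hg u hu, ?_⟩
      have hu'' : f u = c • u := Module.End.mem_eigenspace_iff.mp hu'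
      refine Module.End.mem_eigenspace_iff.mpr ?_
      have := congrArg (fun k => k u) (hS f hf g hg)
      simp only [Module.End.mul_apply] at this
      rw [this, hu'', map_smul]
  have hnl := hmin _ hmem
  have heq : W ⊓ Module.End.eigenspace f c = W := by
    by_contra hne
    exact hnl (lt_of_le_of_ne inf_le_left hne)
  have : v ∈ W ⊓ Module.End.eigenspace f c := by rw [heq]; exact hv
  exact Module.End.mem_eigenspace_iff.mp this.2

lemma exists_char_extension {Γ : Type} [Group Γ] (M : Subgroup Γ) (φ : M →* ℂˣ)
    (hφ : ∀ m : M, (m : Γ) ∈ commutator Γ → φ m = 1) :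
    ∃ ν : Γ →* ℂˣ, ∀ m : M, ν m = φ m := by
  let f : M →* Abelianization Γ := Abelianization.of.comp M.subtype
  have hsurj : Function.Surjective f.rangeRestrict := f.rangeRestrict_surjective
  have hker : f.rangeRestrict.ker ≤ φ.ker := by
    intro m hm
    rw [MonoidHom.ker_rangeRestrict, MonoidHom.mem_ker] at hm
    refine hφ m ?_
    exact (QuotientGroup.eq_one_iff (m : Γ)).mp hm
  let φ' : f.range →* ℂˣ := f.rangeRestrict.liftOfSurjective hsurj ⟨φ, hker⟩
  have hφ' : ∀ m, φ' (f.rangeRestrict m) = φ m := fun m =>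
    MonoidHom.liftOfRightInverse_comp_apply _ _ (Function.rightInverse_surjInv hsurj) ⟨φ, hker⟩ m
  let _ : DivisibleBy (Additive ℂˣ) ℕ := divisibleByOfSMulRightSurj _ _ (by
    intro k hk a
    obtain ⟨z, hz⟩ := IsAlgClosed.exists_pow_nat_eq ((Additive.toMul a : ℂˣ) : ℂ) (Nat.pos_of_ne_zero hk)
    have hz0 : z ≠ 0 := by
      rintro rfl
      rw [zero_pow hk] at hz
      exact (Additive.toMul a).ne_zero hz.symm
    refine ⟨Additive.ofMul (Units.mk0 z hz0), ?_⟩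
    apply Additive.toMul.injective
    apply Units.ext
    simpa using hz)
  let _ : DivisibleBy (Additive ℂˣ) ℤ := AddGroup.divisibleByIntOfDivisibleByNat _
  obtain ⟨h, hh⟩ := (Module.Baer.of_divisible (Additive ℂˣ)).extension_property
    (MonoidHom.toAdditive f.range.subtype).toIntLinearMap
    (by intro a b hab; exact Subtype.ext hab)
    (MonoidHom.toAdditive φ').toIntLinearMap
  refine ⟨(MonoidHom.toAdditive.symm h.toAddMonoidHom).comp Abelianization.of, fun m => ?_⟩
  rw [← hφ' m]
  exact congrArg (fun k => Additive.toMul (k (Additive.ofMul (f.rangeRestrict m)))) hh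

lemma exists_max_abelian {Γ : Type} [Group Γ] (N : Subgroup Γ)
    (hN : ∀ a ∈ N, ∀ b ∈ N, a * b = b * a) :
    ∃ M : Subgroup Γ, N ≤ M ∧ (∀ a ∈ M, ∀ b ∈ M, a * b = b * a) ∧
      ∀ g, (∀ a ∈ M, a * g = g * a) → g ∈ M := by
  obtain ⟨M, hNM, hM⟩ := zorn_le_nonempty₀ {M : Subgroup Γ | ∀ a ∈ M, ∀ b ∈ M, a * b = b * a}
    (by
      intro c hc hch y hy
      refine ⟨sSup c, ?_, fun z hz => le_sSup hz⟩
      intro a ha b hb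
      rw [Subgroup.mem_sSup_of_directedOn ⟨y, hy⟩ hch.directedOn] at ha hb
      obtain ⟨s, hs, has⟩ := ha
      obtain ⟨t, ht, hbt⟩ := hb
      rcases hch.total hs ht with h | h
      · exact hc ht a (h has) b hbt
      · exact hc hs a has b (h hbt)) N hN
  refine ⟨M, hNM, hM.1, fun g hg => ?_⟩
  have hcl : Subgroup.closure (insert g (M : Set Γ)) ∈
      {M : Subgroup Γ | ∀ a ∈ M, ∀ b ∈ M, a * b = b * a} := by
    have hcomm := Subgroup.isMulCommutative_closure (k := insert g (M : Set Γ)) (by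
      rintro a (rfl | ha) b (rfl | hb)
      · rfl
      · exact (hg b hb).symm
      · exact hg a ha
      · exact hM.1 a ha b hb)
    intro a ha b hb
    exact congrArg Subtype.val (hcomm.is_comm.comm ⟨a, ha⟩ ⟨b, hb⟩)
  exact hM.2 hcl (fun x hx => Subgroup.subset_closure (Set.mem_insert_of_mem _ hx))
    (Subgroup.subset_closure (Set.mem_insert _ _))

open scoped commutatorElement in
lemma core {n : ℕ} (hn : 0 < n) {Γ : Type} [Group Γ] (ρ : Γ →* Mat n)
    (hinj : Function.Injective ρ)
    (hirr : ∀ W : Submodule ℂ (Fin n → ℂ), (∀ g, ∀ v ∈ W, ρ g *ᵥ v ∈ W) → W = ⊥ ∨ W = ⊤)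
    (hN : ∀ a ∈ commutator Γ, a * a = 1) :
    ∃ (Q : Type) (_ : CommGroup Q) (π : Γ →* Q) (ν : Γ →* ℂˣ)
      (e : Module.Basis Q ℂ (Fin n → ℂ)), ∀ (g : Γ) (c : ℂ), c ^ 2 * (ν g : ℂ) = 1 → ∀ q,
        ∃ s : ℂ, (s = 1 ∨ s = -1) ∧ (c • ρ g) *ᵥ e q = s • e (π g * q) := by
  have hNc : ∀ a ∈ commutator Γ, ∀ b ∈ commutator Γ, a * b = b * a := by
    intro a ha b hb
    have h1 := inv_eq_of_mul_eq_one_left (hN a ha)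
    have h2 := inv_eq_of_mul_eq_one_left (hN b hb)
    have h3 := inv_eq_of_mul_eq_one_left (hN _ (mul_mem ha hb))
    rw [_root_.mul_inv_rev, h1, h2] at h3
    exact h3.symm
  obtain ⟨M, hNM, hMc, hMmax⟩ := exists_max_abelian (commutator Γ) hNc
  have hcm : ∀ a b : Γ, a * b * a⁻¹ * b⁻¹ ∈ M := fun a b =>
    hNM (Subgroup.commutator_mem_commutator (Subgroup.mem_top a) (Subgroup.mem_top b))
  have hnorm : M.Normal := ⟨fun m hm g => by
    have := mul_mem (hcm g m) hm
    simpa [mul_assoc] using this⟩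
  have hnc : ∀ m ∈ M, ∀ g : Γ, g⁻¹ * m * g ∈ M := fun m hm g => by
    simpa using hnorm.conj_mem m hm g⁻¹
  -- common eigenvector
  have : Nonempty (Fin n) := ⟨⟨0, hn⟩⟩
  obtain ⟨v, hv0, hv⟩ := exists_common_eigenvector (V := Fin n → ℂ)
    ((fun m : Γ => Matrix.toLin' (ρ m)) '' M) (by
      rintro _ ⟨a, ha, rfl⟩ _ ⟨b, hb, rfl⟩
      simp only [Module.End.mul_eq_comp, ← Matrix.toLin'_mul, ← map_mul, hMc a ha b hb])
  have hv' : ∀ m : M, ∃ c : ℂ, ρ m *ᵥ v = c • v := fun m => by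
    simpa using hv _ ⟨m, m.2, rfl⟩
  choose lam₀ hlam₀ using hv'
  have hsm : ∀ {a b : ℂ}, a • v = b • v → a = b := fun h => smul_left_injective ℂ hv0 h
  let lam : M →* ℂ :=
    { toFun := lam₀
      map_one' := hsm (by rw [← hlam₀]; simp)
      map_mul' := fun a b => hsm (by
        rw [← hlam₀, Subgroup.coe_mul, map_mul, ← Matrix.mulVec_mulVec, hlam₀ b,
          Matrix.mulVec_smul, hlam₀ a, smul_smul, mul_comm]) }
  have hlam : ∀ m : M, ρ m *ᵥ v = lam m • v := hlam₀
  -- extend the square of the character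
  obtain ⟨ν, hν⟩ := exists_char_extension M (lam.toHomUnits ^ 2) (by
    intro m hm
    have h1 : m * m = 1 := Subtype.ext (hN m hm)
    rw [MonoidHom.pow_apply, pow_two, ← map_mul, h1, map_one])
  have hν' : ∀ m : M, ((ν m : ℂˣ) : ℂ) = lam m ^ 2 := by
    intro m
    rw [hν m]
    simp
  -- the orbit spans
  have hspan : Submodule.span ℂ (Set.range fun h : Γ => ρ h *ᵥ v) = ⊤ := by
    refine (hirr _ ?_).resolve_left ?_
    · intro g w hw
      induction hw using Submodule.span_induction with
      | mem x hx =>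
        obtain ⟨h, rfl⟩ := hx
        exact Submodule.subset_span ⟨g * h, by simp [Matrix.mulVec_mulVec]⟩
      | zero => simp
      | add x y _ _ hx hy => rw [Matrix.mulVec_add]; exact add_mem hx hy
      | smul c x _ hx => rw [Matrix.mulVec_smul]; exact Submodule.smul_mem _ _ hx
    · intro h
      have : ρ 1 *ᵥ v ∈ Submodule.span ℂ (Set.range fun h : Γ => ρ h *ᵥ v) :=
        Submodule.subset_span ⟨1, rfl⟩
      rw [h] at this
      simp at this
      exact hv0 this
  have hstab : ∀ g : Γ, (∀ m ∈ M, ρ (g⁻¹ * m * g * m⁻¹) *ᵥ v = v) → g ∈ M := by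
    intro g hg
    apply hMmax
    intro m hm
    have h1 : g⁻¹ * m * g * m⁻¹ = 1 := by
      apply hinj
      apply Matrix.toLin'.injective
      refine LinearMap.ext_on_range hspan fun h => ?_
      have h2 := hg (h⁻¹ * m * h) (hnc m hm h)
      have h3 : (g⁻¹ * m * g * m⁻¹) * h =
          h * (g⁻¹ * (h⁻¹ * m * h) * g * (h⁻¹ * m * h)⁻¹) := by
        have hk : g⁻¹ * h⁻¹ * g * h ∈ M := by simpa using hcm g⁻¹ h⁻¹
        have := hMc _ hk _ (hnc _ (hnc m hm h) g)
        calc (g⁻¹ * m * g * m⁻¹) * h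
            = h * ((g⁻¹ * h⁻¹ * g * h)⁻¹ * ((g⁻¹ * (h⁻¹ * m * h) * g) * (g⁻¹ * h⁻¹ * g * h))
              * (h⁻¹ * m * h)⁻¹) := by group
          _ = _ := by rw [← this]; group
      simp only [Matrix.toLin'_apply, Matrix.mulVec_mulVec, ← map_mul, map_one, Matrix.one_mulVec]
      rw [one_mul, h3, map_mul, ← Matrix.mulVec_mulVec, h2]
    have h2 : m * g = g * m := by
      calc m * g = g * (g⁻¹ * m * g * m⁻¹) * m := by group
        _ = g * m := by rw [h1, mul_one]
    exact h2
  have hsqrt : ∀ g : Γ, ∃ c : ℂ, c ^ 2 * (ν g : ℂ) = 1 := by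
    intro g
    obtain ⟨z, hz⟩ := IsAlgClosed.exists_pow_nat_eq ((ν g : ℂ)⁻¹) (n := 2) (by norm_num)
    exact ⟨z, by rw [hz, inv_mul_cancel₀ (ν g).ne_zero]⟩
  choose r hr using hsqrt
  have hr0 : ∀ g, r g ≠ 0 := by
    intro g h
    have := hr g
    simp [h] at this
  let Q := Γ ⧸ M
  let instQ : CommGroup Q :=
    { (inferInstance : Group (Γ ⧸ M)) with
      mul_comm := by
        intro a b
        induction a using QuotientGroup.induction_on with | H a => ?_
        induction b using QuotientGroup.induction_on with | H b => ?_
        refine QuotientGroup.eq.mpr ?_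
        have := hcm b⁻¹ a⁻¹
        simpa [mul_assoc] using this }
  let π : Γ →* Q := QuotientGroup.mk' M
  let e : Q → (Fin n → ℂ) := fun q => r q.out • (ρ q.out *ᵥ v)
  have he0 : ∀ q, e q ≠ 0 := by
    intro q h
    have h1 : ρ q.out *ᵥ v = 0 := (smul_eq_zero.mp h).resolve_left (hr0 _)
    apply hv0
    calc v = ρ (q.out⁻¹ * q.out) *ᵥ v := by simp
      _ = 0 := by rw [map_mul, ← Matrix.mulVec_mulVec, h1, Matrix.mulVec_zero]
  have hact : ∀ (g : Γ) (c : ℂ), c ^ 2 * (ν g : ℂ) = 1 → ∀ q,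
        ∃ s : ℂ, (s = 1 ∨ s = -1) ∧ (c • ρ g) *ᵥ e q = s • e (π g * q) := by
    intro g c hc q
    have hm : (π g * q).out⁻¹ * (g * q.out) ∈ M := by
      refine QuotientGroup.eq.mp ?_
      rw [QuotientGroup.mk_mul, QuotientGroup.out_eq', QuotientGroup.out_eq']
      rfl
    set a := q.out with ha
    set b := (π g * q).out with hb
    obtain ⟨m, hmm⟩ : ∃ m : M, (m : Γ) = b⁻¹ * (g * a) := ⟨⟨_, hm⟩, rfl⟩
    have hga : g * a = b * m := by rw [hmm]; group
    have hνe : (ν g : ℂ) * ν a = ν b * lam m ^ 2 := by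
      rw [← hν' m, ← Units.val_mul, ← Units.val_mul, ← map_mul, ← map_mul, hga]
    refine ⟨c * r a * lam m * (r b)⁻¹, ?_, ?_⟩
    · rw [← sq_eq_one_iff]
      have h1 : c ^ 2 * r a ^ 2 * lam m ^ 2 = r b ^ 2 := by
        have ha' := hr a
        have hb' := hr b
        linear_combination (-c^2 * r a^2 * lam m^2) * hb' - c^2 * r a^2 * r b^2 * hνe +
          r b ^2 * r a^2 * ν a * hc + r b^2 * ha'
      have := hr0 b
      field_simp
      linear_combination h1
    · have h1 : ρ g *ᵥ (ρ a *ᵥ v) = lam m • (ρ b *ᵥ v) := by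
        rw [Matrix.mulVec_mulVec, ← map_mul, hga, map_mul, ← Matrix.mulVec_mulVec, hlam,
          Matrix.mulVec_smul]
      show (c • ρ g) *ᵥ (r a • (ρ a *ᵥ v)) = (c * r a * lam m * (r b)⁻¹) • (r b • (ρ b *ᵥ v))
      rw [Matrix.smul_mulVec, Matrix.mulVec_smul, h1, smul_smul, smul_smul, smul_smul,
        mul_assoc _ (r b)⁻¹, inv_mul_cancel₀ (hr0 b), mul_one]
  have hespan : ⊤ ≤ Submodule.span ℂ (Set.range e) := by
    refine ((hirr _ ?_).resolve_left ?_).ge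
    · intro g w hw
      induction hw using Submodule.span_induction with
      | mem x hx =>
        obtain ⟨q, rfl⟩ := hx
        obtain ⟨s, -, hs⟩ := hact g (r g) (hr g) q
        have : ρ g *ᵥ e q = ((r g)⁻¹ * s) • e (π g * q) := by
          rw [mul_smul, ← hs, Matrix.smul_mulVec, smul_smul, inv_mul_cancel₀ (hr0 g), one_smul]
        rw [this]
        exact Submodule.smul_mem _ _ (Submodule.subset_span ⟨_, rfl⟩)
      | zero => simp
      | add x y _ _ hx hy => rw [Matrix.mulVec_add]; exact add_mem hx hy
      | smul c x _ hx => rw [Matrix.mulVec_smul]; exact Submodule.smul_mem _ _ hx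
    · intro h
      have : e 1 ∈ Submodule.span ℂ (Set.range e) := Submodule.subset_span ⟨1, rfl⟩
      rw [h] at this
      exact he0 1 (by simpa using this)
  let χ : Q → M → ℂ := fun q m => lam ⟨q.out⁻¹ * m * q.out, hnc m m.2 _⟩
  have hχ : Function.Injective χ := by
    intro p q hpq
    rw [← QuotientGroup.out_eq' p, ← QuotientGroup.out_eq' q]
    refine QuotientGroup.eq.mpr ?_
    set a := p.out with ha
    set b := q.out with hb
    apply hstab
    intro m hm
    have h1 := congrFun hpq ⟨a * m * a⁻¹, hnorm.conj_mem m hm a⟩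
    have h2 : lam ⟨(a⁻¹ * b)⁻¹ * m * (a⁻¹ * b), hnc m hm _⟩ = lam ⟨m, hm⟩ := by
      calc _ = lam ⟨b⁻¹ * (a * m * a⁻¹) * b, hnc _ (hnorm.conj_mem m hm a) _⟩ := by
            congr 2; group
        _ = lam ⟨a⁻¹ * (a * m * a⁻¹) * a, hnc _ (hnorm.conj_mem m hm a) _⟩ := h1.symm
        _ = _ := by congr 2; group
    have h3 := hlam (⟨(a⁻¹ * b)⁻¹ * m * (a⁻¹ * b), hnc m hm _⟩ * ⟨m, hm⟩⁻¹)
    rw [map_mul, h2, ← map_mul, mul_inv_cancel, map_one, one_smul] at h3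
    exact h3
  have hli : LinearIndependent ℂ e := by
    have hind := Module.End.independent_iInf_maxGenEigenspace_of_forall_mapsTo
      (fun m : M => Matrix.toLin' (ρ m)) (fun i j φ =>
        Module.End.mapsTo_maxGenEigenspace_of_comm (by
          show _ * _ = _ * _
          simp only [Module.End.mul_eq_comp, ← Matrix.toLin'_mul, ← map_mul,
            hMc i i.2 j j.2]) φ)
    refine iSupIndep.linearIndependent _ (hind.comp hχ) ?_ he0
    intro q
    simp only [Function.comp, Submodule.mem_iInf]
    intro m
    have h1 : e q ∈ Module.End.eigenspace (Matrix.toLin' (ρ m)) (χ q m) := by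
      rw [Module.End.mem_eigenspace_iff, Matrix.toLin'_apply]
      show ρ m *ᵥ (r q.out • (ρ q.out *ᵥ v)) = χ q m • (r q.out • (ρ q.out *ᵥ v))
      rw [Matrix.mulVec_smul, smul_comm (χ q m), Matrix.mulVec_mulVec, ← map_mul,
        show (m : Γ) * q.out = q.out * (q.out⁻¹ * m * q.out) by group, map_mul,
        ← Matrix.mulVec_mulVec]
      rw [hlam ⟨q.out⁻¹ * m * q.out, hnc m m.2 _⟩, Matrix.mulVec_smul]
    exact (Module.End.genEigenspace (Matrix.toLin' (ρ m)) (χ q m)).monotone le_top h1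
  refine ⟨Q, instQ, π, ν, Module.Basis.mk hli hespan, fun g c hc q => ?_⟩
  obtain ⟨s, hs, h⟩ := hact g c hc q
  exact ⟨s, hs, by simpa using h⟩

lemma hard_dir {n : ℕ} (G : Subgroup (Mat n)ˣ)
    (hirr : IrreducibleSet ((fun u : (Mat n)ˣ => (u : Mat n)) '' G))
    (hG : ∀ A ∈ ⁅G, G⁆, (A : Mat n) ^ 2 = 1) :
      ∃ (T : Mat n) (H : Set (Mat n)), IsUnit T ∧ IsMatGroup H ∧
        (∀ M ∈ H, IsSignedPermMat M) ∧
        (∀ A ∈ H, ∀ B ∈ H, patMat A * patMat B = patMat B * patMat A) ∧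
        ∀ A ∈ G, ∃ c : ℂ, c ≠ 0 ∧ ∃ M ∈ H, T⁻¹ * (A : Mat n) * T = c • M := by
  rcases Nat.eq_zero_or_pos n with rfl | hn
  · refine ⟨1, Set.univ, isUnit_one, ⟨trivial, fun _ _ _ _ => trivial, fun A _ => ⟨?_, trivial⟩⟩,
      fun M _ => ⟨⟨fun i => i.elim0, fun i => i.elim0⟩, fun i => i.elim0⟩,
      fun _ _ _ _ => Subsingleton.elim _ _, fun A _ => ⟨1, one_ne_zero, 1, trivial,
        Subsingleton.elim _ _⟩⟩
    rw [Subsingleton.elim A 1]; exact isUnit_one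
  let ρ : G →* Mat n := (Units.coeHom (Mat n)).comp G.subtype
  have hρ : ∀ g : G, ρ g = ((g : (Mat n)ˣ) : Mat n) := fun _ => rfl
  obtain ⟨Q, _, π, ν, e, he⟩ := core hn ρ
    (fun a b h => Subtype.ext (Units.ext h))
    (fun W hW => hirr W (by
      rintro _ ⟨u, hu, rfl⟩ v hv
      exact hW ⟨u, hu⟩ v hv))
    (fun a ha => by
      have h1 : (a : (Mat n)ˣ) ∈ ⁅G, G⁆ := by
        rw [← Subgroup.map_subtype_commutator]
        exact ⟨a, ha, rfl⟩
      have h2 := hG a h1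
      exact Subtype.ext (Units.ext (by simpa [pow_two] using h2)))
  have : Finite Q := Module.Finite.finite_basis e
  have : Fintype Q := Fintype.ofFinite Q
  have hcard : Fintype.card Q = n := by
    rw [← Module.finrank_eq_card_basis e]; simp
  let ε : Q ≃ Fin n := Fintype.equivFinOfCardEq hcard
  let b := e.reindex ε
  let σ : G → Equiv.Perm (Fin n) := fun g => (ε.symm.trans (Equiv.mulLeft (π g))).trans ε
  have hσ : ∀ g h, σ g * σ h = σ h * σ g := by
    intro g h
    ext i
    simp [σ, mul_left_comm]
  have hb : ∀ (g : G) (c : ℂ), c ^ 2 * (ν g : ℂ) = 1 → ∃ s : Fin n → ℂ,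
      (∀ j, s j = 1 ∨ s j = -1) ∧ ∀ j, (c • ρ g) *ᵥ b j = s j • b (σ g j) := by
    intro g c hc
    choose s hs h using he g c hc
    exact ⟨fun j => s (ε.symm j), fun j => hs _, fun j => by simpa [b, σ] using h (ε.symm j)⟩
  let T : Mat n := Matrix.of fun i j => b j i
  have hTu : IsUnit T := by
    rw [← Matrix.linearIndependent_cols_iff_isUnit]
    exact b.linearIndependent
  have hT' : T⁻¹ * T = 1 := Matrix.nonsing_inv_mul T ((Matrix.isUnit_iff_isUnit_det T).mp hTu)
  have hT'' : T * T⁻¹ = 1 := Matrix.mul_nonsing_inv T ((Matrix.isUnit_iff_isUnit_det T).mp hTu)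
  have hsp : ∀ (g : G) (c : ℂ), c ^ 2 * (ν g : ℂ) = 1 → ∃ s : Fin n → ℂ,
      (∀ j, s j = 1 ∨ s j = -1) ∧ T⁻¹ * (c • ρ g) * T = spMat (σ g) s := by
    intro g c hc
    obtain ⟨s, hs, h⟩ := hb g c hc
    refine ⟨s, hs, ?_⟩
    have h1 : (c • ρ g) * T = T * spMat (σ g) s := by
      ext i j
      have h2 := congrFun (h j) i
      have h3 : ((c • ρ g) * T) i j = ((c • ρ g) *ᵥ b j) i := rfl
      rw [h3, h2, Matrix.mul_apply, Finset.sum_eq_single (σ g j)]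
      · simp [spMat, T, mul_comm]
      · intro k _ hk; simp [spMat, hk]
      · simp
    rw [mul_assoc, h1, ← mul_assoc, hT', one_mul]
  have hconj : ∀ X Y : Mat n, (T⁻¹ * X * T) * (T⁻¹ * Y * T) = T⁻¹ * (X * Y) * T := by
    intro X Y
    calc _ = T⁻¹ * X * (T * T⁻¹) * Y * T := by simp only [mul_assoc]
      _ = _ := by rw [hT'']; simp only [mul_assoc, mul_one]
  refine ⟨T, {X | ∃ (g : G) (c : ℂ), c ^ 2 * (ν g : ℂ) = 1 ∧ X = T⁻¹ * (c • ρ g) * T}, hTu,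
    ⟨⟨1, 1, by simp, by simp [hT']⟩, ?_, ?_⟩, ?_, ?_, ?_⟩
  · rintro _ ⟨g, c, hc, rfl⟩ _ ⟨h, d, hd, rfl⟩
    refine ⟨g * h, c * d, ?_, ?_⟩
    · rw [map_mul, Units.val_mul]
      linear_combination d ^ 2 * (ν h : ℂ) * hc + hd
    · rw [hconj, smul_mul_smul_comm, map_mul]
  · rintro _ ⟨g, c, hc, rfl⟩
    have hc0 : c ≠ 0 := by rintro rfl; simp at hc
    have h1 : (T⁻¹ * (c • ρ g) * T) * (T⁻¹ * (c⁻¹ • ρ g⁻¹) * T) = 1 := by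
      rw [hconj, smul_mul_smul_comm, ← map_mul, mul_inv_cancel₀ hc0, mul_inv_cancel, map_one,
        one_smul, mul_one, hT']
    refine ⟨IsUnit.of_mul_eq_one _ h1, g⁻¹, c⁻¹, ?_, Matrix.inv_eq_right_inv h1⟩
    rw [map_inv, Units.val_inv_eq_inv_val, inv_pow, ← mul_inv, hc, inv_one]
  · rintro _ ⟨g, c, hc, rfl⟩
    obtain ⟨s, hs, h⟩ := hsp g c hc
    rw [h]
    exact isSigned_spMat _ _ hs
  · rintro _ ⟨g, c, hc, rfl⟩ _ ⟨h, d, hd, rfl⟩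
    obtain ⟨s, hs, h1⟩ := hsp g c hc
    obtain ⟨t, ht, h2⟩ := hsp h d hd
    rw [h1, h2, patMat_spMat _ _ fun j => pm_ne (hs j), patMat_spMat _ _ fun j => pm_ne (ht j),
      spMat_mul, spMat_mul, hσ]
    rfl
  · intro A hA
    obtain ⟨z, hz⟩ := IsAlgClosed.exists_pow_nat_eq ((ν ⟨A, hA⟩ : ℂ)⁻¹) (n := 2) (by norm_num)
    have hz1 : z ^ 2 * (ν ⟨A, hA⟩ : ℂ) = 1 := by rw [hz, inv_mul_cancel₀ (Units.ne_zero _)]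
    have hz0 : z ≠ 0 := by rintro rfl; simp at hz1
    refine ⟨z⁻¹, inv_ne_zero hz0, _, ⟨⟨A, hA⟩, z, hz1, rfl⟩, ?_⟩
    rw [hρ, Matrix.mul_smul, Matrix.smul_mul, smul_smul, inv_mul_cancel₀ hz0, one_smul]


/-- For an irreducible matrix group `G`, the commutator subgroup
`[G,G]` consists of involutions iff, up to simultaneous similarity, `G ⊆ ℂ^×·H`
for some signed permutation group `H` with commutative pattern. -/
theorem stmt14 {n : ℕ} (G : Subgroup (Mat n)ˣ)
    (hirr : IrreducibleSet ((fun u : (Mat n)ˣ => (u : Mat n)) '' G)) :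
    (∀ A ∈ ⁅G, G⁆, (A : Mat n) ^ 2 = 1) ↔
      ∃ (T : Mat n) (H : Set (Mat n)), IsUnit T ∧ IsMatGroup H ∧
        (∀ M ∈ H, IsSignedPermMat M) ∧
        (∀ A ∈ H, ∀ B ∈ H, patMat A * patMat B = patMat B * patMat A) ∧
        ∀ A ∈ G, ∃ c : ℂ, c ≠ 0 ∧ ∃ M ∈ H, T⁻¹ * (A : Mat n) * T = c • M := by
  constructor
  · exact hard_dir G hirr
  · rintro ⟨T, H, hT, _, hs, hp, hG⟩
    exact easy_dir G T H hT hs hp hG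
end

section
/- Let G be a compact subgroup of GL_n(ℂ) such that every ring commutator ST − TS with S, T ∈ G has real spectrum. Then the set J of all involutions in G (matrices J ∈ G with J² = I) is a commutative normal subgroup of G. -/
open Matrix BigOperators
open scoped Classical

attribute [local instance] Matrix.linftyOpNormedRing Matrix.linftyOpNormedAlgebra

lemma nil_aux {n : ℕ} (N : Mat n) (h : ∀ z ∈ spectrum ℂ N, z = 0) : IsNilpotent N := by
  have h1 := (IsAlgClosed.splits N.charpoly).eq_prod_roots_of_monic N.charpoly_monic
  have h2 : N.charpoly.roots = Multiset.replicate (Multiset.card N.charpoly.roots) 0 := by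
    apply Multiset.eq_replicate_card.2
    intro z hz
    apply h
    rw [Matrix.mem_spectrum_iff_isRoot_charpoly]
    exact Polynomial.isRoot_of_mem_roots hz
  rw [h2] at h1
  have h3 := Matrix.aeval_self_charpoly N
  rw [h1] at h3
  exact ⟨Multiset.card N.charpoly.roots, by simpa using h3⟩

lemma bdd_pow_le {x C : ℝ} (hx : ∀ m : ℕ, x ^ m ≤ C) : x ≤ 1 := by
  by_contra! h
  obtain ⟨m, hm⟩ := pow_unbounded_of_one_lt C h
  exact absurd (hx m) (not_le.2 hm)

lemma spec_le {n : ℕ} (U : Mat n) (C : ℝ) (hU : ∀ m : ℕ, ‖U ^ m‖ ≤ C) (z : ℂ)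
    (hz : z ∈ spectrum ℂ U) : ‖z‖ ≤ 1 := by
  apply bdd_pow_le (C := C * ‖(1 : Mat n)‖)
  intro m
  have h1 := spectrum.pow_mem_pow U m hz
  have h2 := spectrum.norm_le_norm_mul_of_mem h1
  rw [norm_pow] at h2
  exact h2.trans (mul_le_mul_of_nonneg_right (hU m) (norm_nonneg _))

lemma unip_aux {n : ℕ} (N : Mat n) (hN : IsNilpotent N) (C : ℝ)
    (hb : ∀ m : ℕ, ‖(1 + N) ^ m‖ ≤ C) : N = 0 := by
  have key : ∀ k : ℕ, N ^ (k + 2) = 0 → N ^ (k + 1) = 0 := by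
    intro k hk
    have e : ∀ m : ℕ, (1 + N) ^ m * N ^ k = N ^ k + (m : ℝ) • N ^ (k + 1) := by
      intro m
      induction m with
      | zero => simp
      | succ m ih =>
        rw [pow_succ', mul_assoc, ih, add_mul, one_mul, mul_add, mul_smul_comm, ← pow_succ',
          ← pow_succ', hk]
        push_cast
        rw [add_smul, one_smul, smul_zero]
        abel
    by_contra hne
    have hpos : 0 < ‖N ^ (k + 1)‖ := norm_pos_iff.2 hne
    obtain ⟨m, hm⟩ := exists_nat_gt ((C * ‖N ^ k‖ + ‖N ^ k‖) / ‖N ^ (k + 1)‖)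
    rw [div_lt_iff₀ hpos] at hm
    have h1 : (m : ℝ) • N ^ (k + 1) = (1 + N) ^ m * N ^ k - N ^ k := by rw [e]; abel
    have h2 : (m : ℝ) * ‖N ^ (k + 1)‖ ≤ C * ‖N ^ k‖ + ‖N ^ k‖ := by
      calc (m : ℝ) * ‖N ^ (k + 1)‖ = ‖(m : ℝ) • N ^ (k + 1)‖ := by
            rw [norm_smul]; simp
        _ ≤ ‖(1 + N) ^ m * N ^ k‖ + ‖N ^ k‖ := by rw [h1]; exact norm_sub_le _ _
        _ ≤ _ := by
          gcongr
          exact (norm_mul_le _ _).trans (mul_le_mul_of_nonneg_right (hb m) (norm_nonneg _))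
    linarith
  obtain ⟨k, hk⟩ := hN
  have : ∀ k : ℕ, N ^ (k + 1) = 0 → N = 0 := by
    intro k
    induction k with
    | zero => simp
    | succ k ih => exact fun h => ih (key k h)
  exact this k (by rw [pow_succ, hk, zero_mul])

lemma sq_one_aux {n : ℕ} (U V : Mat n) (hUV : U * V = 1) (C : ℝ) (hU : ∀ m : ℕ, ‖U ^ m‖ ≤ C)
    (hV : ∀ m : ℕ, ‖V ^ m‖ ≤ C) (hr : RealSpectrum (U - V)) : U ^ 2 = 1 := by
  have hVU : V * U = 1 := mul_eq_one_comm.1 hUV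
  have hspec : ∀ z ∈ spectrum ℂ U, z ^ 2 = 1 := by
    intro z hz
    have hz0 : z ≠ 0 := by
      rintro rfl
      rw [spectrum.zero_mem_iff] at hz
      exact hz (IsUnit.of_mul_eq_one V hUV)
    have hz1 := spec_le U C hU z hz
    have hzV : z⁻¹ ∈ spectrum ℂ V := by
      rw [spectrum.mem_iff] at hz ⊢
      intro hu
      apply hz
      have : algebraMap ℂ (Mat n) z - U = - (z • U) * (algebraMap ℂ (Mat n) z⁻¹ - V) := by
        simp only [Algebra.algebraMap_eq_smul_one, mul_sub, neg_mul, smul_mul_assoc,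
          mul_smul_comm, hUV, mul_one, smul_neg, smul_smul, inv_mul_cancel₀ hz0, one_smul]
        abel
      rw [this]
      refine IsUnit.mul (IsUnit.neg ?_) hu
      exact IsUnit.of_mul_eq_one (z⁻¹ • V) (by
        rw [smul_mul_smul_comm, hUV, mul_inv_cancel₀ hz0, one_smul])
    have hz2 := spec_le V C hV _ hzV
    rw [norm_inv] at hz2
    have hn : ‖z‖ = 1 := le_antisymm hz1 (by
      have := norm_pos_iff.2 hz0
      rwa [inv_le_one₀ this] at hz2)
    have hm : z - z⁻¹ ∈ spectrum ℂ (U - V) := by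
      rw [spectrum.mem_iff] at hz ⊢
      intro hu
      apply hz
      have : algebraMap ℂ (Mat n) (z - z⁻¹) - (U - V) =
          (algebraMap ℂ (Mat n) z - U) * (1 + z⁻¹ • V) := by
        simp only [Algebra.algebraMap_eq_smul_one, mul_add, sub_mul, smul_mul_assoc, mul_smul_comm, hUV, mul_one,
          one_mul, sub_smul, smul_sub, smul_smul, mul_inv_cancel₀ hz0, inv_mul_cancel₀ hz0, one_smul]
        abel
      rw [this, Matrix.isUnit_iff_isUnit_det, Matrix.det_mul] at hu
      rw [Matrix.isUnit_iff_isUnit_det]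
      exact isUnit_of_mul_isUnit_left hu
    have him := hr _ hm
    rw [Complex.inv_eq_conj hn] at him
    simp at him
    have him0 : z.im = 0 := by linarith
    have h3 : z * (starRingEnd ℂ) z = 1 := by
      rw [Complex.mul_conj, Complex.normSq_eq_norm_sq, hn]; simp
    rw [Complex.conj_eq_iff_im.2 him0] at h3
    rw [sq, h3]
  have hnil : IsNilpotent (U ^ 2 - 1) := by
    apply nil_aux
    intro z hz
    by_contra hne
    have : U ^ 2 - 1 = Polynomial.aeval U (Polynomial.X ^ 2 - 1 : Polynomial ℂ) := by simp
    rw [this] at hz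
    have : Nontrivial (Mat n) := by
      by_contra h
      rw [not_nontrivial_iff_subsingleton] at h
      rw [spectrum.of_subsingleton] at hz
      exact hz
    rw [spectrum.map_polynomial_aeval] at hz
    obtain ⟨w, hw, rfl⟩ := hz
    apply hne
    simp [hspec w hw]
  have := unip_aux (U ^ 2 - 1) hnil C (by
    intro m
    rw [add_sub_cancel, ← pow_mul]
    exact hU _)
  exact sub_eq_zero.1 this

/-- In a compact matrix group all of whose ring commutators have real
spectra, the set of involutions is a commutative normal subgroup. -/
theorem stmt18 {n : ℕ} (G : Set (Mat n))
    (hgrp : IsMatGroup G) (hcpt : IsCompact G)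
    (hcomm : ∀ A ∈ G, ∀ B ∈ G, RealSpectrum (A * B - B * A))
    (J : Set (Mat n)) (hJ : J = {M | M ∈ G ∧ M ^ 2 = 1}) :
    (∀ A ∈ J, ∀ B ∈ J, A * B = B * A) ∧
    (1 : Mat n) ∈ J ∧
    (∀ A ∈ J, ∀ B ∈ J, A * B ∈ J) ∧
    (∀ A ∈ J, A⁻¹ ∈ J) ∧
    (∀ g ∈ G, ∀ A ∈ J, g⁻¹ * A * g ∈ J) := by
  subst hJ
  obtain ⟨h1, hmul, hinv⟩ := hgrp
  have hpow : ∀ A ∈ G, ∀ m : ℕ, A ^ m ∈ G := by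
    intro A hA m
    induction m with
    | zero => simpa using h1
    | succ m ih => rw [pow_succ]; exact hmul _ ih _ hA
  obtain ⟨C, hC⟩ := hcpt.isBounded.exists_norm_le
  have hc : ∀ A ∈ {M | M ∈ G ∧ M ^ 2 = 1}, ∀ B ∈ {M | M ∈ G ∧ M ^ 2 = 1}, A * B = B * A := by
    rintro A ⟨hA, hA2⟩ B ⟨hB, hB2⟩
    rw [sq] at hA2 hB2
    have hUV : (A * B) * (B * A) = 1 := by
      rw [mul_assoc, ← mul_assoc B B A, hB2, one_mul, hA2]
    have := sq_one_aux (A * B) (B * A) hUV C (fun m => hC _ (hpow _ (hmul _ hA _ hB) m))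
      (fun m => hC _ (hpow _ (hmul _ hB _ hA) m)) (hcomm A hA B hB)
    calc A * B = (A * B) * ((A * B) * (B * A)) := by rw [hUV, mul_one]
      _ = (A * B) ^ 2 * (B * A) := by rw [sq, mul_assoc (A * B)]
      _ = B * A := by rw [this, one_mul]
  refine ⟨hc, ⟨h1, one_pow 2⟩, ?_, ?_, ?_⟩
  · intro A hA B hB
    exact ⟨hmul _ hA.1 _ hB.1, by rw [Commute.mul_pow (hc A hA B hB), hA.2, hB.2, one_mul]⟩
  · rintro A ⟨hA, hA2⟩
    have : A⁻¹ = A := Matrix.inv_eq_left_inv (by rw [← sq, hA2])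
    rw [this]
    exact ⟨hA, hA2⟩
  · rintro g hg A ⟨hA, hA2⟩
    have hdet : IsUnit g.det := (Matrix.isUnit_iff_isUnit_det g).1 (hinv g hg).1
    refine ⟨hmul _ (hmul _ (hinv g hg).2 _ hA) _ hg, ?_⟩
    calc (g⁻¹ * A * g) ^ 2 = g⁻¹ * A * (g * g⁻¹) * A * g := by rw [sq]; simp only [mul_assoc]
      _ = g⁻¹ * (A ^ 2) * g := by rw [Matrix.mul_nonsing_inv _ hdet, mul_one, sq]; simp only [mul_assoc]
      _ = 1 := by rw [hA2, mul_one, Matrix.nonsing_inv_mul _ hdet]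
end

section
/- If G is a nonabelian compact subgroup of GL_n(ℂ) such that every ring commutator ST − TS with S, T ∈ G has real spectrum, then G contains a noncentral involution, i.e., a matrix J ∈ G with J² = I that does not commute with every element of G. -/
open Matrix BigOperators
open scoped Classical

section GroupPart
open Subgroup

theorem conj_inj {Q : Type*} [Group Q] (K : Subgroup Q)
    (hK : ∀ g : Q, ∀ k ∈ K, k ≠ 1 → g * k * g⁻¹ ∈ K → g ∈ K) :
    Function.Injective (fun p : (Q ⧸ K) × {k : K // k ≠ 1} =>
      p.1.out * (p.2.1 : Q) * p.1.out⁻¹) := by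
  rintro ⟨s, k, hk⟩ ⟨t, l, hl⟩ h
  simp only at h
  have h1 : (t.out⁻¹ * s.out) ∈ K := by
    apply hK _ k k.2 (by simpa using hk)
    have : t.out⁻¹ * s.out * (k : Q) * (t.out⁻¹ * s.out)⁻¹ = l := by
      calc _ = t.out⁻¹ * (s.out * (k : Q) * s.out⁻¹) * t.out := by group
        _ = l := by rw [h]; group
    rw [this]; exact l.2
  have h2 : t = s := by
    have := QuotientGroup.eq.2 h1
    simpa using this
  subst h2
  have : (k : Q) = l := by simpa using h
  have : k = l := Subtype.ext this
  subst this
  rfl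

theorem card_dom {Q : Type*} [Group Q] [Finite Q] (K : Subgroup Q) :
    Nat.card ((Q ⧸ K) × {k : K // k ≠ 1}) + Nat.card (Q ⧸ K) = Nat.card Q := by
  classical
  have h1 : Nat.card {k : K // k ≠ 1} + 1 = Nat.card K := by
    have := Fintype.ofFinite K
    rw [Nat.card_eq_fintype_card, Nat.card_eq_fintype_card, Fintype.card_subtype_compl]
    simp
    have : 0 < Fintype.card K := Fintype.card_pos
    omega
  rw [Nat.card_prod, K.card_eq_card_quotient_mul_card_subgroup, ← h1]
  ring

theorem two_idx {Q : Type*} [Group Q] [Finite Q] (K : Subgroup Q) (hK : K ≠ ⊥) :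
    2 * Nat.card (Q ⧸ K) ≤ Nat.card Q := by
  rw [K.card_eq_card_quotient_mul_card_subgroup, mul_comm]
  apply Nat.mul_le_mul_left
  by_contra h
  exact hK (Subgroup.card_le_one_iff_eq_bot K |>.1 (by omega))

theorem frob_meet {Q : Type*} [Group Q] [Finite Q] (K L : Subgroup Q) (hK0 : K ≠ ⊥) (hL0 : L ≠ ⊥)
    (hK : ∀ g : Q, ∀ k ∈ K, k ≠ 1 → g * k * g⁻¹ ∈ K → g ∈ K)
    (hL : ∀ g : Q, ∀ k ∈ L, k ≠ 1 → g * k * g⁻¹ ∈ L → g ∈ L) :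
    ∃ g : Q, ∃ k ∈ K, k ≠ 1 ∧ g * k * g⁻¹ ∈ L := by
  by_contra hcon
  push Not at hcon
  have hinj : Function.Injective (Sum.elim
     (Sum.elim (fun p : (Q ⧸ K) × {k : K // k ≠ 1} => p.1.out * (p.2.1 : Q) * p.1.out⁻¹)
      (fun p : (Q ⧸ L) × {k : L // k ≠ 1} => p.1.out * (p.2.1 : Q) * p.1.out⁻¹))
      (fun _ : Unit => (1 : Q))) := by
    refine ((conj_inj K hK).sumElim (conj_inj L hL) ?_).sumElim
      (Function.injective_of_subsingleton _) ?_
    · rintro ⟨s, k, hk⟩ ⟨t, l, hl⟩ h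
      simp only at h
      apply hcon (t.out⁻¹ * s.out) k k.2 (by simpa using hk)
      have : t.out⁻¹ * s.out * (k : Q) * (t.out⁻¹ * s.out)⁻¹ = l := by
        calc _ = t.out⁻¹ * (s.out * (k : Q) * s.out⁻¹) * t.out := by group
          _ = l := by rw [h]; group
      rw [this]; exact l.2
    · rintro (⟨s, k, hk⟩ | ⟨s, k, hk⟩) _ h <;> simp at h <;> exact hk (by simpa using h)
  have h := Nat.card_le_card_of_injective _ hinj
  rw [Nat.card_sum, Nat.card_sum] at h
  have := card_dom K
  have := card_dom L
  have := two_idx K hK0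
  have := two_idx L hL0
  simp only [Nat.card_unique] at h
  omega

theorem frob_top {Q : Type*} [Group Q] [Finite Q] (K : Subgroup Q)
    (h : ∀ x : Q, ∃ g : Q, g * x * g⁻¹ ∈ K) : K = ⊤ := by
  have hs : Function.Surjective (Sum.elim
     (fun p : (Q ⧸ K) × {k : K // k ≠ 1} => p.1.out * (p.2.1 : Q) * p.1.out⁻¹)
      (fun _ : Unit => (1 : Q))) := by
    intro x
    by_cases hx : x = 1
    · exact ⟨Sum.inr (), by simp [hx]⟩
    obtain ⟨g, hg⟩ := h x
    obtain ⟨k, hk⟩ := QuotientGroup.mk_out_eq_mul K g⁻¹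
    have hm : (k : Q)⁻¹ * (g * x * g⁻¹) * k ∈ K := K.mul_mem (K.mul_mem (K.inv_mem k.2) hg) k.2
    refine ⟨Sum.inl ⟨(g⁻¹ : Q), ⟨⟨_, hm⟩, ?_⟩⟩, ?_⟩
    · intro h1
      have h1 := congrArg Subtype.val h1
      simp only [coe_one] at h1
      apply hx
      calc x = g⁻¹ * k * ((k : Q)⁻¹ * (g * x * g⁻¹) * k) * (g⁻¹ * k)⁻¹ := by group
        _ = 1 := by rw [h1]; group
    · simp only [Sum.elim_inl, hk]
      group
  have h := Nat.card_le_card_of_surjective _ hs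
  rw [Nat.card_sum] at h
  have := card_dom K
  simp only [Nat.card_unique] at h
  have h1 : K.index ≤ 1 := by unfold Subgroup.index; omega
  have h2 : K.index ≠ 0 := Subgroup.index_ne_zero_of_finite
  exact Subgroup.index_eq_one.1 (by omega)

theorem group_main (m : ℕ) : ∀ (Γ : Type) [Group Γ], Nat.card (Γ ⧸ center Γ) = m →
    Finite (Γ ⧸ center Γ) →
    (∀ a t : Γ, a * (t * a * t⁻¹) = (t * a * t⁻¹) * a → a * t = t * a) →
    ∀ a b : Γ, a * b = b * a := by
  induction m using Nat.strong_induction_on with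
  | _ m ih =>
  intro Γ _ hm hfin hP
  by_contra hna
  push Not at hna
  -- centralizers of noncentral elements are abelian
  have hC : ∀ x : Γ, x ∉ center Γ → ∀ a b : Γ, a * x = x * a → b * x = x * b → a * b = b * a := by
    intro x hx a b ha hb
    let C := centralizer ({x} : Set Γ)
    have hZC : center Γ ≤ C := center_le_centralizer _
    let f : C →* Γ ⧸ center Γ := (QuotientGroup.mk' (center Γ)).comp C.subtype
    have hker : f.ker ≤ center C := by
      intro c hc
      have : (c : Γ) ∈ center Γ := by
        simpa [f, MonoidHom.mem_ker] using hc
      rw [mem_center_iff]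
      intro d
      exact Subtype.ext (mem_center_iff.1 this d)
    have hfinr : Finite (C ⧸ f.ker) := Finite.of_injective _ (QuotientGroup.kerLift_injective f)
    have hsurj : Function.Surjective (QuotientGroup.map f.ker (center C) (MonoidHom.id C) hker) := by
      intro y
      induction y using QuotientGroup.induction_on with
      | H z => exact ⟨(z : C ⧸ f.ker), rfl⟩
    have hfinC : Finite (C ⧸ center C) := Finite.of_surjective _ hsurj
    have hle : Nat.card (C ⧸ center C) ≤ Nat.card (C ⧸ f.ker) :=
      Nat.card_le_card_of_surjective _ hsurj
    have hlt : Nat.card (C ⧸ f.ker) < m := by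
      rw [← hm, Nat.card_congr (QuotientGroup.quotientKerEquivRange f).toEquiv]
      have hne : f.range ≠ ⊤ := by
        intro htop
        apply hx
        rw [mem_center_iff]
        intro g
        have : (g : Γ ⧸ center Γ) ∈ f.range := by rw [htop]; trivial
        obtain ⟨c, hc⟩ := this
        have h1 : (c : Γ)⁻¹ * g ∈ center Γ := QuotientGroup.eq.1 hc
        have h2 : g ∈ C := by
          have := C.mul_mem c.2 (hZC h1)
          simpa using this
        exact (mem_centralizer_singleton_iff.1 h2)
      exact lt_of_le_of_ne (Subgroup.card_le_card_group _)
        (fun h => hne ((Subgroup.card_eq_iff_eq_top _).1 h))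
    have := ih _ (lt_of_le_of_lt hle hlt) C rfl hfinC (by
      intro a t hat
      exact Subtype.ext (hP a t (congrArg Subtype.val hat)))
      ⟨a, mem_centralizer_singleton_iff.2 ha⟩ ⟨b, mem_centralizer_singleton_iff.2 hb⟩
    exact congrArg Subtype.val this
  let K : Γ → Subgroup (Γ ⧸ center Γ) := fun x =>
    (centralizer ({x} : Set Γ)).map (QuotientGroup.mk' (center Γ))
  have hKmem : ∀ x g : Γ, (g : Γ ⧸ center Γ) ∈ K x ↔ g * x = x * g := by
    intro x g
    constructor
    · rintro ⟨c, hc, hcg⟩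
      have h1 : (c : Γ)⁻¹ * g ∈ center Γ := QuotientGroup.eq.1 hcg
      have h2 : g ∈ centralizer ({x} : Set Γ) := by
        have := mul_mem hc (center_le_centralizer _ h1)
        simpa using this
      exact (mem_centralizer_singleton_iff.1 h2)
    · intro h
      exact ⟨g, mem_centralizer_singleton_iff.2 h, rfl⟩
  have hone : ∀ g : Γ, (g : Γ ⧸ center Γ) = 1 ↔ g ∈ center Γ := fun g => QuotientGroup.eq_one_iff g
  have hK0 : ∀ x, x ∉ center Γ → K x ≠ ⊥ := by
    intro x hx hbot
    have : (x : Γ ⧸ center Γ) ∈ K x := (hKmem x x).2 rfl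
    rw [hbot, mem_bot, hone] at this
    exact hx this
  have hKmal : ∀ x, x ∉ center Γ → ∀ g, ∀ k ∈ K x, k ≠ 1 → g * k * g⁻¹ ∈ K x → g ∈ K x := by
    intro x hx g k hk hk1 hgk
    induction g using QuotientGroup.induction_on with | H g => ?_
    induction k using QuotientGroup.induction_on with | H k => ?_
    have hgk' : ((g * k * g⁻¹ : Γ) : Γ ⧸ center Γ) ∈ K x := hgk
    rw [hKmem] at hk hgk' ⊢
    rw [Ne, hone] at hk1
    have h1 := hC x hx _ _ hk hgk'
    have h2 := hP _ _ h1
    exact hC k hk1 _ _ h2.symm hk.symm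
  obtain ⟨a, b, hab⟩ := hna
  have ha : a ∉ center Γ := fun h => hab (mem_center_iff.1 h b).symm
  have htop : K a = ⊤ := by
    apply frob_top
    intro y
    induction y using QuotientGroup.induction_on with | H y => ?_
    by_cases hy : y ∈ center Γ
    · refine ⟨1, ?_⟩
      rw [(hone y).2 hy]; simp
    obtain ⟨g, k, hk, hk1, hgk⟩ := frob_meet (K y) (K a) (hK0 y hy) (hK0 a ha) (hKmal y hy) (hKmal a ha)
    induction g using QuotientGroup.induction_on with | H g => ?_
    induction k using QuotientGroup.induction_on with | H k => ?_
    refine ⟨(g : Γ), ?_⟩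
    have hgk' : ((g * k * g⁻¹ : Γ) : Γ ⧸ center Γ) ∈ K a := hgk
    change ((g * y * g⁻¹ : Γ) : Γ ⧸ center Γ) ∈ K a
    rw [hKmem] at hk hgk' ⊢
    rw [Ne, hone] at hk1
    have hc : g * k * g⁻¹ ∉ center Γ := by
      intro h
      apply hk1
      have := (inferInstance : (center Γ).Normal).conj_mem _ h g⁻¹
      simpa [mul_assoc] using this
    refine hC _ hc _ _ ?_ hgk'.symm
    calc g * y * g⁻¹ * (g * k * g⁻¹) = g * (y * k) * g⁻¹ := by group
      _ = g * k * g⁻¹ * (g * y * g⁻¹) := by rw [← hk]; group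
  have : (b : Γ ⧸ center Γ) ∈ K a := by rw [htop]; trivial
  rw [hKmem] at this
  exact hab this.symm

end GroupPart

section MatrixPart

open scoped Matrix.Norms.L2Operator in
theorem selfAdj_of_real {n : ℕ} (M : Mat n) (hn : M * Mᴴ = Mᴴ * M) (h : RealSpectrum M) :
    Mᴴ = M := by
  have h1 : IsStarNormal M := ⟨by rw [commute_iff_eq]; exact hn.symm⟩
  have h2 : SpectrumRestricts M Complex.reCLM := by
    rw [SpectrumRestricts.real_iff]
    intro x hx
    apply Complex.ext <;> simp [h x hx]
  exact (isSelfAdjoint_iff_isStarNormal_and_quasispectrumRestricts.2 ⟨h1, h2⟩ : IsSelfAdjoint M)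

theorem real_trace_sq {n : ℕ} (M : Mat n) (h : RealSpectrum M) : 0 ≤ (trace (M * M)).re := by
  rw [Matrix.trace_eq_sum_roots_charpoly]
  have hre : ∀ s : Multiset ℂ, (∀ x ∈ s, 0 ≤ x.re) → 0 ≤ s.sum.re := by
    intro s
    induction s using Multiset.induction_on with
    | empty => simp
    | cons a s ih =>
      intro hs
      simp only [Multiset.sum_cons, Complex.add_re]
      exact add_nonneg (hs a (by simp)) (ih fun x hx => hs x (by simp [hx]))
  apply hre
  intro x hx
  have hx1 : x ∈ spectrum ℂ (M * M) :=
    Matrix.mem_spectrum_iff_isRoot_charpoly.2 (Polynomial.isRoot_of_mem_roots hx)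
  rw [← pow_two, spectrum.map_pow_of_pos M (by norm_num)] at hx1
  obtain ⟨z, hz, rfl⟩ := hx1
  have := h z hz
  simp only [pow_two, Complex.mul_re, this]
  nlinarith [mul_self_nonneg z.re]

/-- commuting unitaries -/
theorem unit_adj_comm {n : ℕ} {A B : Mat n} (hA : A * Aᴴ = 1) (hA' : Aᴴ * A = 1)
    (h : A * B = B * A) : Aᴴ * B = B * Aᴴ := by
  calc Aᴴ * B = Aᴴ * B * (A * Aᴴ) := by rw [hA, mul_one]
    _ = Aᴴ * (B * A) * Aᴴ := by simp only [mul_assoc]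
    _ = (Aᴴ * A) * B * Aᴴ := by rw [← h]; simp only [mul_assoc]
    _ = B * Aᴴ := by rw [hA', one_mul]

theorem diff_rel {n : ℕ} {A B : Mat n} (hA : A * Aᴴ = 1) (hB : B * Bᴴ = 1)
    (h : A * B = B * A) (hr : RealSpectrum (A - B)) : (A - B) * (A * B) = - (A - B) := by
  have hA' : Aᴴ * A = 1 := mul_eq_one_comm.1 hA
  have hB' : Bᴴ * B = 1 := mul_eq_one_comm.1 hB
  have c1 := unit_adj_comm hA hA' h
  have c2 := unit_adj_comm hB hB' h.symm
  have hs : (A - B)ᴴ = A - B := by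
    apply selfAdj_of_real _ _ hr
    rw [conjTranspose_sub]
    simp only [mul_sub, sub_mul, hA, hA', hB, hB', c1, c2]
    abel
  rw [conjTranspose_sub] at hs
  rw [← hs, sub_mul, ← mul_assoc Aᴴ, hA', h, ← mul_assoc Bᴴ, hB', hs]
  simp

theorem sq_eq {n : ℕ} {A B : Mat n} (hA : A * Aᴴ = 1) (hB : B * Bᴴ = 1)
    (h : A * B = B * A) (hr : RealSpectrum (A - B)) (hr2 : RealSpectrum (A * A - B * B)) :
    A * A = B * B ∧ (A - B) * (A * A) = A - B := by
  have d1 := diff_rel hA hB h hr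
  have hcomm : Commute A B := h
  have e2 : A * A * (B * B) = B * B * (A * A) :=
    ((hcomm.mul_left hcomm).mul_right (hcomm.mul_left hcomm)).eq
  have d2 := diff_rel (A := A * A) (B := B * B)
    (by rw [conjTranspose_mul, mul_assoc, ← mul_assoc A Aᴴ, hA, one_mul, hA])
    (by rw [conjTranspose_mul, mul_assoc, ← mul_assoc B Bᴴ, hB, one_mul, hB]) e2 hr2
  have f : A * A - B * B = (A + B) * (A - B) := by
    rw [mul_sub, add_mul, add_mul, h]; abel
  have g : A * A * (B * B) = (A * B) * (A * B) := by
    calc A * A * (B * B) = A * (A * B) * B := by simp only [mul_assoc]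
      _ = A * (B * A) * B := by rw [h]
      _ = (A * B) * (A * B) := by simp only [mul_assoc]
  rw [f, g, mul_assoc, ← mul_assoc (A - B), d1, neg_mul, d1, neg_neg, ← f] at d2
  have z : A * A - B * B = 0 := by
    have : (2 : ℂ) • (A * A - B * B) = 0 := by
      rw [two_smul]; nth_rewrite 1 [d2]; simp
    simpa using this
  refine ⟨sub_eq_zero.1 z, ?_⟩
  have k : (A - B) * (A + B) = 0 := by
    rw [← z, sub_mul, mul_add, mul_add, h]; abel
  have : (A - B) * (A * A) = (A - B) * (A + B) * A - (A - B) * (A * B) := by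
    rw [h]; noncomm_ring
  rw [this, k, d1]; simp

theorem J_one {n : ℕ} {A T J : Mat n} (hA : A * Aᴴ = 1) (hT : T * Tᴴ = 1) (hJ : J * J = 1)
    (hJs : Jᴴ = J) (hJA : J * A = A * J) (hJT : J * T = T * J) (hAT : A * T = J * T * A)
    (h1 : (A - J * A) * (A * A) = A - J * A) (h2 : (T - J * T) * (T * T) = T - J * T)
    (hr : RealSpectrum (A * T - T * A)) : J = 1 := by
  have hA' : Aᴴ * A = 1 := mul_eq_one_comm.1 hA
  have hT' : Tᴴ * T = 1 := mul_eq_one_comm.1 hT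
  obtain ⟨E, hE⟩ : ∃ E : Mat n, E = 1 - J := ⟨_, rfl⟩
  have EA : E * A = A * E := by rw [hE, sub_mul, mul_sub, hJA]; simp
  have ET : E * T = T * E := by rw [hE, sub_mul, mul_sub, hJT]; simp
  have EJ : E * J = -E := by rw [hE, sub_mul, hJ]; simp
  have Es : Eᴴ = E := by rw [hE, conjTranspose_sub, hJs]; simp
  have EAA : E * A = E * Aᴴ := by
    have : A * E * (A * A) = A * E := by rw [← EA, hE, sub_mul, one_mul, h1]
    calc E * A = (Aᴴ * A) * E * A * (A * Aᴴ) := by rw [hA, hA']; simp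
      _ = Aᴴ * (A * E * (A * A)) * Aᴴ := by simp only [mul_assoc]
      _ = E * Aᴴ := by rw [this, ← mul_assoc, hA', one_mul]
  have ETT : E * T = E * Tᴴ := by
    have : T * E * (T * T) = T * E := by rw [← ET, hE, sub_mul, one_mul, h2]
    calc E * T = (Tᴴ * T) * E * T * (T * Tᴴ) := by rw [hT, hT']; simp
      _ = Tᴴ * (T * E * (T * T)) * Tᴴ := by simp only [mul_assoc]
      _ = E * Tᴴ := by rw [this, ← mul_assoc, hT', one_mul]
  have EAT : E * (A * T) = - (E * (T * A)) := by
    rw [hAT, ← mul_assoc, ← mul_assoc, EJ]; simp [mul_assoc]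
  have EAs : E * Aᴴ = Aᴴ * E := by
    rw [unit_adj_comm hA hA' EA.symm]
  have ETs : E * Tᴴ = Tᴴ * E := by
    rw [unit_adj_comm hT hT' ET.symm]
  have hM : A * T - T * A = - (E * (T * A)) := by
    rw [hAT, hE, sub_mul]; simp [mul_assoc]
  have hMs : (E * (T * A))ᴴ = E * (A * T) := by
    rw [conjTranspose_mul, conjTranspose_mul, Es, mul_assoc, ← ETs, ← ETT, ← mul_assoc, ← EAs, ← EAA,
      mul_assoc]
  have key : (A * T - T * A)ᴴ = A * T - T * A := by
    apply selfAdj_of_real _ _ hr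
    rw [hM, conjTranspose_neg, hMs, EAT]
    simp
  rw [hM, conjTranspose_neg, hMs, EAT, neg_neg] at key
  have z : E * (T * A) = 0 := by
    have : (2 : ℂ) • (E * (T * A)) = 0 := by
      rw [two_smul]; nth_rewrite 1 [key]; simp
    simpa using this
  have : E = 0 := by
    calc E = E * (T * A) * (Aᴴ * Tᴴ) := by
          rw [mul_assoc, mul_assoc T, ← mul_assoc A, hA, one_mul, hT, mul_one]
      _ = 0 := by rw [z, zero_mul]
  rw [hE] at this
  exact (sub_eq_zero.1 this).symm

open scoped Matrix.Norms.Frobenius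

theorem fro_sq {n : ℕ} (X : Mat n) : ‖X‖ ^ 2 = (trace (Xᴴ * X)).re := by
  rw [Matrix.frobenius_norm_def, ← Real.sqrt_eq_rpow, Real.sq_sqrt (by positivity)]
  simp only [Matrix.trace, Matrix.diag, Matrix.mul_apply, Complex.re_sum, conjTranspose_apply]
  rw [Finset.sum_comm]
  refine Finset.sum_congr rfl fun i _ => Finset.sum_congr rfl fun j _ => ?_
  rw [Real.rpow_two, Complex.sq_norm, Complex.normSq_apply]
  simp

theorem fro_left {n : ℕ} {U : Mat n} (hU : U * Uᴴ = 1) (X : Mat n) : ‖U * X‖ = ‖X‖ := by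
  have hU' : Uᴴ * U = 1 := mul_eq_one_comm.1 hU
  have : ‖U * X‖ ^ 2 = ‖X‖ ^ 2 := by
    rw [fro_sq, fro_sq, conjTranspose_mul, mul_assoc, ← mul_assoc Uᴴ, hU', one_mul]
  exact (sq_eq_sq₀ (norm_nonneg _) (norm_nonneg _)).1 this

theorem fro_right {n : ℕ} {U : Mat n} (hU : U * Uᴴ = 1) (X : Mat n) : ‖X * U‖ = ‖X‖ := by
  rw [← frobenius_norm_conjTranspose, conjTranspose_mul,
    fro_left (by simpa using mul_eq_one_comm.1 hU), frobenius_norm_conjTranspose]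

theorem near_comm {n : ℕ} {S T : Mat n} (hS : S * Sᴴ = 1) (hT : T * Tᴴ = 1)
    (hr : RealSpectrum (S * T - T * S)) (dS : ‖S - 1‖ < 1 / 4) (dT : ‖T - 1‖ < 1 / 4) :
    S * T = T * S := by
  have hS' : Sᴴ * S = 1 := mul_eq_one_comm.1 hS
  have hT' : Tᴴ * T = 1 := mul_eq_one_comm.1 hT
  have cS : ∀ X, S * (Sᴴ * X) = X := fun X => by rw [← mul_assoc, hS, one_mul]
  have cS' : ∀ X, Sᴴ * (S * X) = X := fun X => by rw [← mul_assoc, hS', one_mul]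
  have cT : ∀ X, T * (Tᴴ * X) = X := fun X => by rw [← mul_assoc, hT, one_mul]
  have cT' : ∀ X, Tᴴ * (T * X) = X := fun X => by rw [← mul_assoc, hT', one_mul]
  obtain ⟨C, hC⟩ : ∃ C : Mat n, C = S * T - T * S := ⟨_, rfl⟩
  obtain ⟨U, hU⟩ : ∃ C : Mat n, C = Tᴴ * Sᴴ := ⟨_, rfl⟩
  obtain ⟨V, hV⟩ : ∃ C : Mat n, C = Sᴴ * Tᴴ := ⟨_, rfl⟩
  have hUU : U * Uᴴ = 1 := by
    rw [hU, conjTranspose_mul]; simp [mul_assoc, cS', hT']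
  have hVV : V * Vᴴ = 1 := by
    rw [hV, conjTranspose_mul]; simp [mul_assoc, cT', hS']
  have dd : ∀ {P Q : Mat n}, P * Pᴴ = 1 → ‖P - 1‖ < 1 / 4 → ‖Q - 1‖ < 1 / 4 →
      ‖1 - Qᴴ * Pᴴ‖ < 1 / 2 := by
    intro P Q hP hp hq
    have : ‖1 - Qᴴ * Pᴴ‖ = ‖P * (Q - 1) + (P - 1)‖ := by
      rw [← frobenius_norm_conjTranspose, ← norm_neg]
      congr 1
      simp [mul_sub]
    rw [this]
    have := norm_add_le (P * (Q - 1)) (P - 1)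
    rw [fro_left hP] at this
    linarith
  have dU : ‖1 - U‖ < 1 / 2 := by rw [hU]; exact dd hS dS dT
  have dV : ‖1 - V‖ < 1 / 2 := by rw [hV]; exact dd hT dT dS
  have hCs : Cᴴ = - (U * C * V) := by
    rw [hC, hU, hV, conjTranspose_sub, conjTranspose_mul, conjTranspose_mul]
    simp only [mul_sub, sub_mul, mul_assoc, cS, cS', cT', hT, mul_one]
    abel
  have n1 : ‖C + Cᴴ‖ ≤ ‖C‖ := by
    have : C + Cᴴ = (1 - U) * C + U * (C * (1 - V)) := by
      rw [hCs]; noncomm_ring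
    rw [this]
    have a1 := norm_add_le ((1 - U) * C) (U * (C * (1 - V)))
    rw [fro_left hUU] at a1
    have a2 := frobenius_norm_mul (1 - U) C
    have a3 := frobenius_norm_mul C (1 - V)
    nlinarith [norm_nonneg C]
  have n2 : ‖C + Cᴴ‖ ^ 2 = 2 * ‖C‖ ^ 2 + 2 * (trace (C * C)).re := by
    have e1 : trace (C * Cᴴ) = trace (Cᴴ * C) := trace_mul_comm _ _
    have e2 : (trace (Cᴴ * Cᴴ)).re = (trace (C * C)).re := by
      rw [← conjTranspose_mul, trace_conjTranspose]; simp
    rw [fro_sq, fro_sq]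
    simp only [conjTranspose_add, conjTranspose_conjTranspose, add_mul, mul_add, trace_add,
      Complex.add_re, e1, e2]
    ring
  have n3 := real_trace_sq C (by rw [hC]; exact hr)
  have n4 : ‖C‖ = 0 := by
    have := norm_nonneg C
    have := norm_nonneg (C + Cᴴ)
    nlinarith
  have : C = 0 := norm_eq_zero.1 n4
  rw [hC] at this
  exact sub_eq_zero.1 this

theorem unitary_main {n : ℕ} (Γ : Type) [Group Γ] (ρ : Γ →* Mat n)
    (hinj : Function.Injective ρ) (hu : ∀ g, (ρ g)ᴴ = ρ g⁻¹)
    (hr : ∀ a b, RealSpectrum (ρ a * ρ b - ρ b * ρ a))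
    (hinv : ∀ j : Γ, j * j = 1 → ∀ a, j * a = a * j) : ∀ a b : Γ, a * b = b * a := by
  have hU : ∀ g, ρ g * (ρ g)ᴴ = 1 := fun g => by rw [hu, ← map_mul]; simp
  have hconj : ∀ a t : Γ, RealSpectrum (ρ a - ρ (t * a * t⁻¹)) := by
    intro a t
    have := hr (a * t⁻¹) t
    rw [← map_mul, ← map_mul] at this
    simpa [mul_assoc] using this
  have hL1 : ∀ a t : Γ, a * (t * a * t⁻¹) = (t * a * t⁻¹) * a →
      a * a = (t * a * t⁻¹) * (t * a * t⁻¹) ∧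
      (ρ a - ρ (t * a * t⁻¹)) * (ρ a * ρ a) = ρ a - ρ (t * a * t⁻¹) := by
    intro a t h
    have h2 := hconj (a * a) t
    have e : t * (a * a) * t⁻¹ = (t * a * t⁻¹) * (t * a * t⁻¹) := by group
    rw [e, map_mul, map_mul] at h2
    obtain ⟨q1, q2⟩ := sq_eq (hU a) (hU (t * a * t⁻¹)) (by rw [← map_mul, ← map_mul, h]) (hconj a t) h2
    exact ⟨hinj (by rw [map_mul, map_mul, q1]), q2⟩
  have hP : ∀ a t : Γ, a * (t * a * t⁻¹) = (t * a * t⁻¹) * a → a * t = t * a := by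
    intro a t h
    obtain ⟨q1, q2⟩ := hL1 a t h
    obtain ⟨b, hb⟩ : ∃ b, b = t * a * t⁻¹ := ⟨_, rfl⟩
    rw [← hb] at h q1 q2
    obtain ⟨j, hj⟩ : ∃ j, j = a * b⁻¹ := ⟨_, rfl⟩
    have hcb : a * b⁻¹ = b⁻¹ * a := (Commute.inv_right (show Commute a b from h)).eq
    have hjj : j * j = 1 := by
      rw [hj]
      calc a * b⁻¹ * (a * b⁻¹) = a * (b⁻¹ * a) * b⁻¹ := by group
        _ = a * a * b⁻¹ * b⁻¹ := by rw [← hcb]; group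
        _ = 1 := by rw [q1]; group
    have hjc := hinv j hjj
    have hja : b = j * a := by
      rw [hj, mul_assoc, ← hcb, ← mul_assoc, q1]; group
    have hat : a * t = j * t * a := by
      have : t * a = b * t := by rw [hb]; group
      rw [mul_assoc, this, hja, ← mul_assoc, ← mul_assoc, hjj, one_mul]
    have hat' : a * t * a⁻¹ = j * t := by rw [hat]; group
    obtain ⟨-, q3⟩ := hL1 t a (by
      rw [hat', ← mul_assoc, ← hjc])
    rw [hat', map_mul] at q3
    rw [hja, map_mul] at q2
    have hJ1 : ρ j = 1 := by
      apply J_one (hU a) (hU t) _ _ _ _ _ q2 q3 (hr a t)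
      · rw [← map_mul, hjj, map_one]
      · rw [hu, inv_eq_of_mul_eq_one_left hjj]
      · rw [← map_mul, hjc, map_mul]
      · rw [← map_mul, hjc, map_mul]
      · rw [← map_mul, hat, map_mul, map_mul]
    have : j = 1 := hinj (by rw [hJ1, map_one])
    rw [hat, this, one_mul]
  have hnear : ∀ a : Γ, ‖ρ a - 1‖ < 1 / 4 → a ∈ Subgroup.center Γ := by
    intro a ha
    rw [Subgroup.mem_center_iff]
    intro t
    refine (hP a t (hinj ?_)).symm
    rw [map_mul, map_mul ρ _ a]
    refine near_comm (hU _) (hU _) (hr _ _) ha ?_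
    have : ρ (t * a * t⁻¹) - 1 = ρ t * (ρ a - 1) * ρ t⁻¹ := by
      rw [mul_sub, sub_mul, mul_one, ← map_mul, ← map_mul, ← map_mul]; simp
    rwa [this, fro_right (hU _), fro_left (hU _)]
  have hfin : Finite (Γ ⧸ Subgroup.center Γ) := by
    have hb : TotallyBounded (Set.range ρ) := by
      have : ProperSpace (Mat n) := FiniteDimensional.proper ℂ (Mat n)
      refine (isCompact_closedBall (0 : Mat n) ‖(1 : Mat n)‖).totallyBounded.subset ?_
      rintro _ ⟨g, rfl⟩
      rw [mem_closedBall_zero_iff, ← mul_one (ρ g), fro_left (hU g)]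
    obtain ⟨s, hs, hcov⟩ := Metric.totallyBounded_iff.1 hb (1 / 8) (by norm_num)
    have : ∀ g : Γ, ∃ y : s, dist (ρ g) y < 1 / 8 := by
      intro g
      have := hcov ⟨g, rfl⟩
      simp only [Set.mem_iUnion, Metric.mem_ball] at this
      obtain ⟨y, hy, h⟩ := this
      exact ⟨⟨y, hy⟩, h⟩
    choose f hf using this
    have : Finite s := hs
    refine Finite.of_injective (fun q : Γ ⧸ Subgroup.center Γ => f q.out) ?_
    intro p q hpq
    simp only at hpq
    have h1 := hf p.out
    have h2 := hf q.out
    rw [hpq] at h1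
    have h3 : dist (ρ q.out) (ρ p.out) < 1 / 4 := by
      have := dist_triangle_right (ρ q.out) (ρ p.out) (f q.out)
      linarith
    have h4 : p.out⁻¹ * q.out ∈ Subgroup.center Γ := by
      apply hnear
      rw [dist_eq_norm, ← fro_left (hU p.out⁻¹), mul_sub, ← map_mul, ← map_mul] at h3
      simpa using h3
    simpa using QuotientGroup.eq.2 h4
  exact group_main _ Γ rfl hfin hP

end MatrixPart

section HaarPart

open scoped Matrix.Norms.L2Operator ComplexOrder
open MeasureTheory

theorem inv_form {n : ℕ} (Γ : Type) [Group Γ] [TopologicalSpace Γ] [IsTopologicalGroup Γ]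
    [CompactSpace Γ] (φ : Γ →* Mat n) (hφ : Continuous φ) :
    ∃ P : Mat n, P.PosDef ∧ ∀ g, φ g * P * (φ g)ᴴ = P := by
  let _ : MeasurableSpace Γ := borel Γ
  have : BorelSpace Γ := ⟨rfl⟩
  let μ : Measure Γ := Measure.haar
  have hct : Continuous fun g => (φ g)ᴴ := hφ.matrix_conjTranspose
  have hc : Continuous fun g => φ g * (φ g)ᴴ := hφ.mul hct
  have hIntg : Integrable (fun g => φ g * (φ g)ᴴ) μ :=
    hc.integrable_of_hasCompactSupport (HasCompactSupport.of_compactSpace _)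
  refine ⟨∫ g, φ g * (φ g)ᴴ ∂μ, ?_, ?_⟩
  · refine Matrix.PosDef.of_dotProduct_mulVec_pos ?_ ?_
    · let L : Mat n →ₗ[ℝ] Mat n := 
        { toFun := fun M => Mᴴ
          map_add' := fun a b => conjTranspose_add a b
          map_smul' := fun r a => by
            ext i j
            simp [conjTranspose_apply] }
      have := (LinearMap.toContinuousLinearMap L).integral_comp_comm hIntg
      change ∫ g, (φ g * (φ g)ᴴ)ᴴ ∂μ = (∫ g, φ g * (φ g)ᴴ ∂μ)ᴴ at this
      rw [Matrix.IsHermitian, ← this]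
      simp
    · intro x hx
      let L : Mat n →ₗ[ℂ] ℂ := 
        { toFun := fun M => star x ⬝ᵥ (M *ᵥ x)
          map_add' := fun a b => by rw [add_mulVec, dotProduct_add]
          map_smul' := fun r a => by rw [smul_mulVec, dotProduct_smul]; rfl }
      have := (LinearMap.toContinuousLinearMap L).integral_comp_comm hIntg
      change ∫ g, star x ⬝ᵥ ((φ g * (φ g)ᴴ) *ᵥ x) ∂μ = 
        star x ⬝ᵥ ((∫ g, φ g * (φ g)ᴴ ∂μ) *ᵥ x) at this
      rw [← this]
      let r : Γ → ℝ := fun g => ∑ i, Complex.normSq (((φ g)ᴴ *ᵥ x) i)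
      have hr : ∀ g, star x ⬝ᵥ ((φ g * (φ g)ᴴ) *ᵥ x) = (r g : ℂ) := by
        intro g
        rw [← mulVec_mulVec, dotProduct_mulVec]
        have : star x ᵥ* φ g = star ((φ g)ᴴ *ᵥ x) := by
          rw [star_mulVec, conjTranspose_conjTranspose]
        rw [this]
        simp only [dotProduct, r, Complex.ofReal_sum, Complex.normSq_eq_conj_mul_self]
        rfl
      have hcr : Continuous r := by
        refine continuous_finsetSum _ fun i _ => Complex.continuous_normSq.comp ?_
        exact (continuous_apply i).comp (hct.matrix_mulVec continuous_const)
      simp only [hr]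
      rw [integral_complex_ofReal]
      have : 0 < ∫ g, r g ∂μ := by
        refine hcr.integral_pos_of_hasCompactSupport_nonneg_nonzero (x := 1)
          (HasCompactSupport.of_compactSpace _) ?_ ?_
        · intro g
          exact Finset.sum_nonneg fun i _ => Complex.normSq_nonneg _
        · intro h0
          apply hx
          have := (Finset.sum_eq_zero_iff_of_nonneg
            (fun i _ => Complex.normSq_nonneg _)).1 h0
          ext i
          have h1 := this i (Finset.mem_univ _)
          simpa using h1
      exact_mod_cast this
  · intro h
    rw [← integral_const_mul_of_integrable hIntg,
      ← integral_mul_const_of_integrable (hIntg.const_mul _)]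
    have := integral_mul_left_eq_self (μ := μ) (fun g => φ g * (φ g)ᴴ) h
    rw [← this]
    congr 1
    ext1 g
    rw [map_mul, conjTranspose_mul]
    simp only [mul_assoc]

theorem unitarize {n : ℕ} (P : Mat n) (hP : P.PosDef) :
    ∃ Q : (Mat n)ˣ, P = (Q : Mat n) * (Q : Mat n)ᴴ := by
  obtain ⟨B, hB⟩ : ∃ B : Mat n, P = Bᴴ * B := by
    open scoped MatrixOrder in
    exact CStarAlgebra.nonneg_iff_eq_star_mul_self.mp hP.posSemidef.nonneg
  have hu := hP.isUnit
  rw [hB] at hu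
  have hu' : IsUnit Bᴴ := by
    rw [Matrix.isUnit_iff_isUnit_det] at hu ⊢
    rw [det_mul] at hu
    exact isUnit_of_mul_isUnit_left hu
  refine ⟨hu'.unit, ?_⟩
  simp [hB]

end HaarPart

open scoped Matrix.Norms.Frobenius in
theorem emb_val (n : ℕ) : Topology.IsEmbedding (Units.val : (Mat n)ˣ → Mat n) :=
  Units.isOpenEmbedding_val.toIsEmbedding

/-- A nonabelian compact matrix group all of whose ring commutators
have real spectra contains a noncentral involution. -/
theorem stmt19 {n : ℕ} (G : Set (Mat n))
    (hgrp : IsMatGroup G) (hcpt : IsCompact G)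
    (hnonab : ∃ A ∈ G, ∃ B ∈ G, A * B ≠ B * A)
    (hcomm : ∀ A ∈ G, ∀ B ∈ G, RealSpectrum (A * B - B * A)) :
    ∃ J ∈ G, J ^ 2 = 1 ∧ ∃ A ∈ G, J * A ≠ A * J := by
  obtain ⟨h1, hmul, hinv⟩ := hgrp
  by_contra hcon
  push Not at hcon
  let Γ : Subgroup (Mat n)ˣ :=
    { carrier := {u | (u : Mat n) ∈ G}
      one_mem' := h1
      mul_mem' := fun {a b} ha hb => hmul _ ha _ hb
      inv_mem' := fun {a} ha => by
        have := (hinv _ ha).2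
        rwa [Set.mem_ofPred_eq, Matrix.coe_units_inv] }
  have hmem : ∀ u : (Mat n)ˣ, u ∈ Γ ↔ (u : Mat n) ∈ G := fun u => Iff.rfl
  have hlift : ∀ A ∈ G, ∃ u : Γ, ((u : (Mat n)ˣ) : Mat n) = A := by
    intro A hA
    exact ⟨⟨(hinv A hA).1.unit, hA⟩, rfl⟩
  have hcΓ : IsCompact (Γ : Set (Mat n)ˣ) := by
    have hemb := emb_val n
    rw [hemb.isInducing.isCompact_iff]
    convert hcpt
    ext A
    constructor
    · rintro ⟨u, hu, rfl⟩; exact hu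
    · intro hA
      obtain ⟨u, hu⟩ := hlift A hA
      exact ⟨u, u.2, hu⟩
  have : CompactSpace Γ := isCompact_iff_compactSpace.1 hcΓ
  let φ : Γ →* Mat n := (Units.coeHom (Mat n)).comp Γ.subtype
  have hφ : Continuous φ := Units.continuous_val.comp continuous_subtype_val
  obtain ⟨P, hP, hPi⟩ := inv_form Γ φ hφ
  obtain ⟨Q, hQ⟩ := unitarize P hP
  let ρ : Γ →* Mat n :=
    (Units.coeHom (Mat n)).comp ((MulAut.conj Q⁻¹).toMonoidHom.comp Γ.subtype)
  have hρ : ∀ g : Γ, ρ g = ((Q⁻¹ : (Mat n)ˣ) : Mat n) * φ g * (Q : Mat n) := by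
    intro g
    simp [ρ, φ]
  have hinj : Function.Injective ρ := by
    intro a b hab
    rw [hρ, hρ] at hab
    have : φ a = φ b := by
      have h7 := Q.mul_left_inj.1 hab
      exact (Q⁻¹).mul_right_inj.1 h7
    exact Subtype.ext (Units.ext this)
  have hab := unitary_main Γ ρ hinj ?_ ?_ ?_
  · obtain ⟨A, hA, B, hB, hne⟩ := hnonab
    obtain ⟨a, rfl⟩ := hlift A hA
    obtain ⟨b, rfl⟩ := hlift B hB
    exact hne (congrArg φ (hab a b))
  · intro g
    have h2 : ρ g * (ρ g)ᴴ = 1 := by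
      have h3 := hPi g
      rw [hQ] at h3
      rw [hρ, conjTranspose_mul, conjTranspose_mul]
      have h4 : (Q : Mat n)ᴴ * ((Q⁻¹ : (Mat n)ˣ) : Mat n)ᴴ = 1 := by
        rw [← conjTranspose_mul]; simp
      calc _ = ((Q⁻¹ : (Mat n)ˣ) : Mat n) * (φ g * ((Q : Mat n) * (Q : Mat n)ᴴ) * (φ g)ᴴ) *
            ((Q⁻¹ : (Mat n)ˣ) : Mat n)ᴴ := by simp only [mul_assoc]
        _ = 1 := by rw [h3, mul_assoc, mul_assoc, h4]; simp
    have h5 : ρ g⁻¹ * ρ g = 1 := by rw [← map_mul]; simp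
    calc (ρ g)ᴴ = ρ g⁻¹ * ρ g * (ρ g)ᴴ := by rw [h5, one_mul]
      _ = ρ g⁻¹ := by rw [mul_assoc, h2, mul_one]
  · intro a b
    have h2 : ρ a * ρ b - ρ b * ρ a =
        ((Q⁻¹ : (Mat n)ˣ) : Mat n) * (φ a * φ b - φ b * φ a) * (Q : Mat n) := by
      rw [← map_mul, ← map_mul, hρ, hρ, map_mul, map_mul, mul_sub, sub_mul]
    unfold RealSpectrum
    rw [h2, spectrum.units_conjugate']
    exact hcomm _ a.2 _ b.2
  · intro j hj a
    have h2 := hcon (φ j) j.2 (by rw [pow_two, ← map_mul, hj, map_one]) (φ a) a.2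
    exact Subtype.ext (Units.ext h2)
end
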